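/- Assume the Generalized Riemann Hypothesis for all Dirichlet L-functions. Let e ∈ ℕ with e ≥ 3, and let π_e(x) = #{p ≤ x : p prime and gcd(p−1, e) = 1}. Then there exists a constant C > 0 (depending only on e) such that for all x ≥ 2, |π_e(x) − (φ₁(e)/φ(e))·li(x)| ≤ C·√x·ln x, where φ₁(e)/φ(e) = ∏_{l prime, l ∣ e} (1 − 1/(l−1)). -/

import Mathlib

open MeasureTheory Set

/-- integral logarithm `li x = ∫₀^x dt / ln t` as a Cauchy principal value at `t = 1` -/
noncomputable def li (x : ℝ) : ℝ :=
  Filter.limUnder (nhdsWithin (0:ℝ) (Set.Ioi 0)) fun ε =>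
    (∫ t in Set.Ioo (0:ℝ) (1 - ε), 1 / Real.log t) + ∫ t in Set.Ioo (1 + ε) x, 1 / Real.log t

/-- The Generalized Riemann Hypothesis for all Dirichlet L-functions: every zero of `L(s, χ)`
with real part strictly between 0 and 1 has real part 1/2. -/
def GeneralizedRiemannHypothesis : Prop :=
  ∀ (N : ℕ) [NeZero N] (χ : DirichletCharacter ℂ N) (s : ℂ),
    DirichletCharacter.LFunction χ s = 0 → 0 < s.re → s.re < 1 → s.re = 1 / 2

/-- Number of primes `p ≤ x` with `gcd(p - 1, e) = 1`. -/
noncomputable def primePiCoprime (e : ℕ) (x : ℝ) : ℕ :=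
  Nat.card {p : ℕ // p.Prime ∧ (p : ℝ) ≤ x ∧ Nat.gcd (p - 1) e = 1}

/-!
Under GRH, Landau's lemma writes `L'/L (s, χ)` (with the pole at `s = 1` removed when `χ` is
trivial) near the critical line as a sum over nearby zeros up to `O(log)`. A Perron formula with a
trapezoidal weight is moved to `re s = 1/2 + 1 / log x`, where `L'/L` is twice its real part minus
its conjugate. A zero contributes a Poisson kernel to the real part, whose integral is bounded
however close the line is; the conjugate becomes holomorphic after reflecting the kernel in the
line, so its contour can be moved away again. This gives
`∑ n ≤ x, χ n * Λ n = [χ = 1] x + O(√x (log x) ^ 2)`. Orthogonality of characters and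
inclusion–exclusion over the primes dividing `e` turn it into the same estimate for the weight
`[gcd (n - 1, e) = 1]`, and partial summation against `1 / log` saves one logarithm.
-/

section LandauLemma

open Complex Metric ComplexConjugate

lemma exists_differentiable_eq_sub_mul {g : ℂ → ℂ} (hg : Differentiable ℂ g) {ρ : ℂ}
    (hρ : g ρ = 0) : ∃ k : ℂ → ℂ, Differentiable ℂ k ∧ ∀ s, g s = (s - ρ) * k s := by
  refine ⟨dslope g ρ, ?_, fun s => ?_⟩
  · rw [← differentiableOn_univ, Complex.differentiableOn_dslope Filter.univ_mem]
    exact hg.differentiableOn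
  · simpa only [hρ, sub_zero, smul_eq_mul] using (sub_smul_dslope g ρ s).symm

/-- The entire function `f` factors as `∏ i, (s - Z i)` times the entire cofactor `g`. This is used
with `Z` running through the zeros of `f` in a disc, repeated according to multiplicity. -/
structure FactorsAs (f g : ℂ → ℂ) {n : ℕ} (Z : Fin n → ℂ) : Prop where
  differentiable : Differentiable ℂ g
  eq_mul : ∀ s, f s = (∏ i, (s - Z i)) * g s

/-- The product of the numerators of the Blaschke factors of the points `Z i` for the disc of
radius `R` about `0`. It has modulus `∏ i, ‖s - Z i‖` on the circle `‖s‖ = R` but, when the `Z i`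
lie in the disc, no zeros inside. -/
noncomputable def reflectedProd (R : ℝ) {n : ℕ} (Z : Fin n → ℂ) (s : ℂ) : ℂ :=
  ∏ i, ((R : ℂ) ^ 2 - conj (Z i) * s) / R

variable {r R R' M ℓ : ℝ} {n : ℕ} {Z : Fin n → ℂ} {f g h : ℂ → ℂ} {s : ℂ}

@[fun_prop]
lemma differentiable_reflectedProd : Differentiable ℂ (reflectedProd R Z) := by
  unfold reflectedProd
  fun_prop

lemma norm_reflectedProd_of_norm_eq (hR : 0 < R) (hs : ‖s‖ = R) :
    ‖reflectedProd R Z s‖ = ∏ i, ‖s - Z i‖ := by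
  rw [reflectedProd, norm_prod]
  refine Finset.prod_congr rfl fun i _ => ?_
  have hsq : (R : ℂ) ^ 2 - conj (Z i) * s = s * conj (s - Z i) := by
    have hnorm : s * conj s = (R : ℂ) ^ 2 := by rw [Complex.mul_conj, normSq_eq_norm_sq, hs]; simp
    rw [← hnorm, map_sub]
    ring
  rw [hsq, norm_div, norm_mul, Complex.norm_conj, hs, Complex.norm_of_nonneg hR.le,
    mul_div_cancel_left₀ _ hR.ne']

lemma norm_reflectedProd_zero (hR : 0 < R) : ‖reflectedProd R Z 0‖ = R ^ n := by
  simp [reflectedProd, pow_two, abs_of_pos hR]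

lemma sq_sub_sq_le_norm_reflected {ρ : ℂ} (hρ : ‖ρ‖ ≤ r) (hs : ‖s‖ ≤ r) :
    R ^ 2 - r ^ 2 ≤ ‖(R : ℂ) ^ 2 - conj ρ * s‖ := by
  have hmul : ‖conj ρ * s‖ ≤ r ^ 2 := by
    rw [norm_mul, Complex.norm_conj, pow_two]
    exact mul_le_mul hρ hs (norm_nonneg _) ((norm_nonneg _).trans hρ)
  have hnorm : ‖(R : ℂ) ^ 2‖ = R ^ 2 := by simp
  linarith [norm_sub_norm_le ((R : ℂ) ^ 2) (conj ρ * s)]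

lemma reflected_ne_zero (hrR : r < R) {ρ : ℂ} (hρ : ‖ρ‖ ≤ r) (hs : ‖s‖ ≤ r) :
    (R : ℂ) ^ 2 - conj ρ * s ≠ 0 := by
  have hr : 0 ≤ r := (norm_nonneg _).trans hs
  have hpos : 0 < R ^ 2 - r ^ 2 := by nlinarith
  exact norm_pos_iff.mp (hpos.trans_le (sq_sub_sq_le_norm_reflected hρ hs))

lemma reflectedProd_ne_zero (hrR : r < R) (hZ : ∀ i, ‖Z i‖ ≤ r) (hs : ‖s‖ ≤ r) :
    reflectedProd R Z s ≠ 0 :=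
  have hR : 0 < R := ((norm_nonneg _).trans hs).trans_lt hrR
  Finset.prod_ne_zero_iff.mpr fun i _ =>
    div_ne_zero (reflected_ne_zero hrR (hZ i) hs) (ofReal_ne_zero.mpr hR.ne')

lemma norm_logDeriv_reflectedProd_le (hrR : r < R) (hZ : ∀ i, ‖Z i‖ ≤ r) (hs : ‖s‖ ≤ r) :
    ‖logDeriv (reflectedProd R Z) s‖ ≤ n * (r / (R ^ 2 - r ^ 2)) := by
  have hr : 0 ≤ r := (norm_nonneg _).trans hs
  have hR : (R : ℂ) ≠ 0 := ofReal_ne_zero.mpr (hr.trans_lt hrR).ne'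
  have hterm (i : Fin n) : logDeriv (fun s : ℂ => ((R : ℂ) ^ 2 - conj (Z i) * s) / R) s
      = -conj (Z i) / ((R : ℂ) ^ 2 - conj (Z i) * s) := by
    have hderiv : HasDerivAt (fun s : ℂ => (R : ℂ) ^ 2 - conj (Z i) * s) (-conj (Z i)) s := by
      simpa using ((hasDerivAt_id s).const_mul (conj (Z i))).const_sub ((R : ℂ) ^ 2)
    simp_rw [div_eq_mul_inv _ (R : ℂ)]
    rw [logDeriv_mul_const s _ (inv_ne_zero hR), logDeriv_apply, hderiv.deriv]
  unfold reflectedProd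
  rw [logDeriv_prod (f := fun i (s : ℂ) => ((R : ℂ) ^ 2 - conj (Z i) * s) / R)
    (fun i _ => div_ne_zero (reflected_ne_zero hrR (hZ i) hs) hR) (fun i _ => by fun_prop)]
  refine (norm_sum_le_of_le (f := fun i => _) Finset.univ
    (n := fun _ => r / (R ^ 2 - r ^ 2)) fun i _ => ?_).trans (by simp)
  rw [hterm, norm_div, norm_neg, Complex.norm_conj]
  exact div_le_div₀ hr (hZ i) (by nlinarith) (sq_sub_sq_le_norm_reflected (hZ i) hs)

namespace FactorsAs

lemma apply_zero (H : FactorsAs f g Z) (i : Fin n) : f (Z i) = 0 := by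
  rw [H.eq_mul, Finset.prod_eq_zero (Finset.mem_univ i) (sub_self _), zero_mul]

lemma norm_mul_reflectedProd_le (H : FactorsAs f g Z) (hR : 0 < R)
    (hM : ∀ s, ‖s‖ ≤ R → ‖f s‖ ≤ M) (hs : ‖s‖ ≤ R) : ‖g s * reflectedProd R Z s‖ ≤ M := by
  have hg := H.differentiable
  refine Complex.norm_le_of_forall_mem_frontier_norm_le (U := ball 0 R)
    (f := fun s => g s * reflectedProd R Z s) isBounded_ball
    (Differentiable.diffContOnCl (by fun_prop)) (fun z hz => ?_) ?_
  · have hz : ‖z‖ = R := by simpa [frontier_ball _ hR.ne'] using hz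
    rw [norm_mul, norm_reflectedProd_of_norm_eq hR hz, ← norm_prod, ← norm_mul, mul_comm,
      ← H.eq_mul]
    exact hM z hz.le
  · simpa [closure_ball _ hR.ne'] using hs

lemma norm_apply_zero_mul_pow_le (H : FactorsAs f g Z) (hr : 0 < r) (hR : 0 < R)
    (hZ : ∀ i, ‖Z i‖ ≤ r) : ‖f 0‖ * (R / r) ^ n ≤ ‖g 0 * reflectedProd R Z 0‖ := by
  have hprod : ∏ i, ‖0 - Z i‖ ≤ r ^ n :=
    (Finset.prod_le_prod (fun _ _ => norm_nonneg _) fun i _ => by simpa using hZ i).trans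
      (by simp : ∏ _i : Fin n, r ≤ r ^ n)
  calc ‖f 0‖ * (R / r) ^ n = (∏ i, ‖0 - Z i‖) * ‖g 0‖ * (R / r) ^ n := by
        rw [H.eq_mul, norm_mul, norm_prod]
    _ ≤ r ^ n * ‖g 0‖ * (R / r) ^ n := by gcongr
    _ = ‖g 0 * reflectedProd R Z 0‖ := by
        rw [norm_mul, norm_reflectedProd_zero hR, div_pow]
        field_simp

lemma card_mul_log_le (H : FactorsAs f g Z) (hr : 0 < r) (hrR : r < R) (hf0 : f 0 ≠ 0)
    (hM : ∀ s, ‖s‖ ≤ R → ‖f s‖ ≤ M) (hZ : ∀ i, ‖Z i‖ ≤ r) :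
    n * Real.log (R / r) ≤ Real.log (M / ‖f 0‖) := by
  have hR := hr.trans hrR
  have hf0 : 0 < ‖f 0‖ := norm_pos_iff.mpr hf0
  rw [← Real.log_pow]
  refine Real.log_le_log (by positivity) ((le_div_iff₀' hf0).mpr ?_)
  exact (H.norm_apply_zero_mul_pow_le hr hR hZ).trans
    (H.norm_mul_reflectedProd_le hR hM (by simpa using hR.le))

lemma exists_cons (H : FactorsAs f g Z) {ρ : ℂ} (hρ : g ρ = 0) :
    ∃ k, FactorsAs f k (Fin.cons ρ Z : Fin (n + 1) → ℂ) := by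
  obtain ⟨k, hk, hgk⟩ := exists_differentiable_eq_sub_mul H.differentiable hρ
  refine ⟨k, hk, fun s => ?_⟩
  rw [H.eq_mul, hgk, Fin.prod_univ_succ, Fin.cons_zero]
  simp only [Fin.cons_succ]
  ring

lemma logDeriv_eq (H : FactorsAs f g Z) (hfs : f s ≠ 0) :
    logDeriv f s = ∑ i, 1 / (s - Z i) + logDeriv g s := by
  have hne := hfs
  rw [H.eq_mul, mul_ne_zero_iff, Finset.prod_ne_zero_iff] at hne
  rw [funext H.eq_mul, logDeriv_mul s (Finset.prod_ne_zero_iff.mpr hne.1) hne.2 (by fun_prop)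
    (H.differentiable s), logDeriv_prod (f := fun i s => s - Z i) hne.1 (fun i _ => by fun_prop)]
  simp [logDeriv_apply]

end FactorsAs

/-- Extracting a further zero of the cofactor must stop because `FactorsAs.card_mul_log_le` bounds
the number of factors. -/
lemma exists_factorsAs (hr : 0 < r) (hrR : r < R) (hf : Differentiable ℂ f) (hf0 : f 0 ≠ 0)
    (hM : ∀ s, ‖s‖ ≤ R → ‖f s‖ ≤ M) :
    ∃ (n : ℕ) (Z : Fin n → ℂ) (g : ℂ → ℂ), FactorsAs f g Z ∧ (∀ i, ‖Z i‖ ≤ r) ∧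
      ∀ s, ‖s‖ ≤ r → g s ≠ 0 := by
  by_contra! hzero
  have factor_all (n : ℕ) : ∃ (Z : Fin n → ℂ) (g : ℂ → ℂ), FactorsAs f g Z ∧ ∀ i, ‖Z i‖ ≤ r := by
    induction n with
    | zero => exact ⟨Fin.elim0, f, ⟨hf, by simp⟩, fun i => i.elim0⟩
    | succ n ih =>
      obtain ⟨Z, g, H, hZ⟩ := ih
      obtain ⟨ρ, hρ, hgρ⟩ := hzero n Z g H hZ
      obtain ⟨k, hk⟩ := H.exists_cons hgρ
      exact ⟨Fin.cons ρ Z, k, hk, Fin.cases hρ hZ⟩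
  have hlog : 0 < Real.log (R / r) := Real.log_pos ((one_lt_div hr).mpr hrR)
  obtain ⟨n, hn⟩ := exists_nat_gt (Real.log (M / ‖f 0‖) / Real.log (R / r))
  obtain ⟨Z, g, H, hZ⟩ := factor_all n
  exact (H.card_mul_log_le hr hrR hf0 hM hZ).not_gt ((div_lt_iff₀ hlog).mp hn)

lemma exists_log_of_ne_zero (hR : 0 < R) (hh : DifferentiableOn ℂ h (ball 0 R))
    (hne : ∀ s ∈ ball 0 R, h s ≠ 0) :
    ∃ φ : ℂ → ℂ, φ 0 = 0 ∧ ∀ s ∈ ball 0 R,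
      HasDerivAt φ (logDeriv h s) s ∧ h s = h 0 * exp (φ s) := by
  obtain ⟨ψ, hψ⟩ := ((hh.deriv isOpen_ball).div hh hne).isExactOn_ball
  set φ : ℂ → ℂ := fun s => ψ s - ψ 0 with φ_def
  have hφ (s) (hs : s ∈ ball 0 R) : HasDerivAt φ (logDeriv h s) s := (hψ s hs).sub_const _
  have hderiv (s) (hs : s ∈ ball 0 R) : HasDerivAt (fun z => h z * exp (-φ z)) 0 s := by
    have hhs := (hh.differentiableAt (isOpen_ball.mem_nhds hs)).hasDerivAt
    refine (hhs.mul (hφ s hs).neg.cexp).congr_deriv ?_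
    simp only [logDeriv_apply, Pi.neg_apply]
    field_simp [hne s hs]
    ring
  refine ⟨φ, by simp [φ_def], fun s hs => ⟨hφ s hs, ?_⟩⟩
  have hconst : h s * exp (-φ s) = h 0 * exp (-φ 0) :=
    isOpen_ball.is_const_of_deriv_eq_zero (convex_ball _ _).isPreconnected
      (fun z hz => (hderiv z hz).differentiableAt.differentiableWithinAt)
      (fun z hz => (hderiv z hz).deriv) hs (mem_ball_self hR)
  rw [show h 0 = h s * exp (-φ s) by rw [hconst]; simp [φ_def], mul_assoc, ← exp_add]
  simp

lemma norm_logDeriv_le_of_norm_le_mul_exp (hr : 0 ≤ r) (hrR : r < R) (hℓ : 0 < ℓ)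
    (hh : DifferentiableOn ℂ h (ball 0 R)) (hne : ∀ s ∈ ball 0 R, h s ≠ 0)
    (hb : ∀ s ∈ ball 0 R, ‖h s‖ ≤ ‖h 0‖ * Real.exp ℓ) (hs : ‖s‖ ≤ r) :
    ‖logDeriv h s‖ ≤ 8 * ℓ * R / (R - r) ^ 2 := by
  have hR : 0 < R := by linarith
  obtain ⟨φ, hφ0, hφ⟩ := exists_log_of_ne_zero hR hh hne
  have hφd : DifferentiableOn ℂ φ (ball 0 R) :=
    fun z hz => (hφ z hz).1.differentiableAt.differentiableWithinAt
  have hre : MapsTo φ (ball 0 R) {z | z.re ≤ ℓ} := by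
    intro z hz
    have hz' := hb z hz
    rw [(hφ z hz).2, norm_mul, Complex.norm_exp] at hz'
    have h0 : 0 < ‖h 0‖ := norm_pos_iff.mpr (hne 0 (mem_ball_self hR))
    exact Real.exp_le_exp.mp (le_of_mul_le_mul_left hz' h0)
  -- Cauchy's estimate on the circle about `s` of radius `(R - r) / 2`
  have hnorm {z : ℂ} (hz : ‖z - s‖ ≤ (R - r) / 2) : ‖z‖ ≤ (R + r) / 2 := by
    linarith [norm_sub_norm_le z s]
  have hsR : s ∈ ball 0 R := by simpa using hs.trans_lt hrR
  have hcauchy : ‖deriv φ s‖ ≤ 2 * ℓ * R / ((R - r) / 2) / ((R - r) / 2) := by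
    refine Complex.norm_deriv_le_of_forall_mem_sphere_norm_le (by linarith) ?_ fun z hz => ?_
    · refine (hφd.mono (closure_ball_subset_closedBall.trans fun z hz => ?_)).diffContOnCl
      rw [mem_ball_zero_iff]
      linarith [hnorm (mem_closedBall_iff_norm.mp hz)]
    · have hz := hnorm (mem_sphere_iff_norm.mp hz).le
      refine (borelCaratheodory_zero hℓ hφd hre hR (mem_ball_zero_iff.mpr (by linarith))
        hφ0).trans ?_
      have : 0 < (R - r) / 2 := by linarith
      gcongr <;> linarith
  rw [← (hφ s hsR).1.deriv]
  refine hcauchy.trans (le_of_eq ?_)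
  field_simp
  ring

/-- **Landau's lemma**. -/
theorem exists_logDeriv_sub_sum_le (hr : 0 < r) (hrR : r < R) (hRR' : R < R')
    (hf : Differentiable ℂ f) (hf0 : f 0 ≠ 0) (hℓ : 0 < ℓ)
    (hM : ∀ s, ‖s‖ ≤ R' → ‖f s‖ ≤ ‖f 0‖ * Real.exp ℓ) :
    ∃ (n : ℕ) (Z : Fin n → ℂ), n * Real.log (R' / R) ≤ ℓ ∧ (∀ i, f (Z i) = 0) ∧
      ∀ s, ‖s‖ ≤ r → f s ≠ 0 → ‖logDeriv f s - ∑ i, 1 / (s - Z i)‖ ≤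
        8 * ℓ * R / (R - r) ^ 2 + n * (R / (R' ^ 2 - R ^ 2)) := by
  have hR := hr.trans hrR
  have hR' := hR.trans hRR'
  obtain ⟨n, Z, g, H, hZ, hg⟩ := exists_factorsAs hR hRR' hf hf0 hM
  refine ⟨n, Z, ?_, H.apply_zero, fun s hs hfs => ?_⟩
  · have hcard := H.card_mul_log_le hR hRR' hf0 hM hZ
    rwa [mul_div_cancel_left₀ _ (norm_ne_zero_iff.mpr hf0), Real.log_exp] at hcard
  have hblaschke : ‖logDeriv (fun s => g s * reflectedProd R' Z s) s‖
      ≤ 8 * ℓ * R / (R - r) ^ 2 := by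
    have hgd := H.differentiable
    refine norm_logDeriv_le_of_norm_le_mul_exp hr.le hrR hℓ
      (Differentiable.differentiableOn (by fun_prop)) (fun z hz => ?_) (fun z hz => ?_) hs
    all_goals rw [mem_ball_zero_iff] at hz
    · exact mul_ne_zero (hg z hz.le) (reflectedProd_ne_zero hRR' hZ hz.le)
    · refine (H.norm_mul_reflectedProd_le hR' hM (hz.le.trans hRR'.le)).trans ?_
      gcongr
      refine le_trans ?_ (H.norm_apply_zero_mul_pow_le hR hR' hZ)
      exact le_mul_of_one_le_right (norm_nonneg _) (one_le_pow₀ ((one_le_div hR).mpr hRR'.le))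
  have hsR : ‖s‖ ≤ R := hs.trans hrR.le
  rw [logDeriv_mul s (hg s hsR) (reflectedProd_ne_zero hRR' hZ hsR) (H.differentiable s)
    (differentiable_reflectedProd s)] at hblaschke
  rw [H.logDeriv_eq hfs, add_sub_cancel_left]
  calc ‖logDeriv g s‖
      ≤ ‖logDeriv g s + logDeriv (reflectedProd R' Z) s‖ + ‖logDeriv (reflectedProd R' Z) s‖ :=
        norm_le_add_norm_add _ _
    _ ≤ 8 * ℓ * R / (R - r) ^ 2 + n * (R / (R' ^ 2 - R ^ 2)) :=
        add_le_add hblaschke (norm_logDeriv_reflectedProd_le hRR' hZ hsR)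

end LandauLemma

section RiemannType

open Complex

/-- An entire function of polynomial growth in a strip which is bounded away from zero on
`re s = 2` and satisfies the Riemann hypothesis. It stands for a Dirichlet `L`-function with its
possible pole removed; `A` is the constant in the growth bounds. -/
structure IsRiemannType (f : ℂ → ℂ) (A : ℝ) : Prop where
  one_le : 1 ≤ A
  differentiable : Differentiable ℂ f
  norm_le : ∀ s : ℂ, 1 / 10 ≤ s.re → s.re ≤ 4 → ‖f s‖ ≤ A * (1 + |s.im|) ^ 2
  le_norm : ∀ t : ℝ, 1 / A ≤ ‖f (2 + t * I)‖
  ne_zero : ∀ s : ℂ, 1 / 2 < s.re → f s ≠ 0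

lemma log_abs_add_two_pos (T : ℝ) : 0 < Real.log (|T| + 2) :=
  Real.log_pos (by linarith [abs_nonneg T])

lemma mul_sq_le_exp_mul_log {A : ℝ} (hA : 1 ≤ A) (T : ℝ) :
    A ^ 2 * (|T| + 3) ^ 2 ≤
      Real.exp ((2 * Real.log A / Real.log 2 + 4) * Real.log (|T| + 2)) := by
  have hT := abs_nonneg T
  have hlog2 : 0 < Real.log 2 := Real.log_pos one_lt_two
  have hlogA : 2 * Real.log A ≤ 2 * Real.log A / Real.log 2 * Real.log (|T| + 2) := by
    rw [div_mul_eq_mul_div, le_div_iff₀ hlog2]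
    have := Real.log_nonneg hA
    gcongr
    linarith
  have hlog3 : Real.log (|T| + 3) ≤ 2 * Real.log (|T| + 2) := by
    rw [← Nat.cast_ofNat (R := ℝ) (n := 2), ← Real.log_pow]
    exact Real.log_le_log (by linarith) (by push_cast; nlinarith)
  rw [← Real.log_le_iff_le_exp (by positivity), Real.log_mul (by positivity) (by positivity),
    Real.log_pow, Real.log_pow]
  push_cast
  linarith

namespace IsRiemannType

variable {f : ℂ → ℂ} {A : ℝ}

lemma differentiableAt_logDeriv (hf : IsRiemannType f A) {s : ℂ} (hs : 1 / 2 < s.re) :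
    DifferentiableAt ℂ (logDeriv f) s :=
  ((hf.differentiable.contDiff (n := 2)).differentiable_deriv_two s).div (hf.differentiable s)
    (hf.ne_zero s hs)

lemma continuous_logDeriv_vertical (hf : IsRiemannType f A) {σ : ℝ} (hσ : 1 / 2 < σ) :
    Continuous fun t : ℝ => logDeriv f (σ + t * I) :=
  continuous_iff_continuousAt.mpr fun t => ContinuousAt.comp (f := fun t : ℝ => (σ + t * I : ℂ))
    (hf.differentiableAt_logDeriv (by simpa using hσ)).continuousAt (by fun_prop)

/-- The point `2 + T * I` is the centre of the discs to which Landau's lemma is applied. -/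
lemma norm_add_le_mul_exp (hf : IsRiemannType f A) (T : ℝ) {s : ℂ} (hs : ‖s‖ ≤ 1.9) :
    ‖f (s + (2 + T * I))‖ ≤ ‖f (2 + T * I)‖ *
      Real.exp ((2 * Real.log A / Real.log 2 + 4) * Real.log (|T| + 2)) := by
  have hA := hf.one_le
  have hre := abs_le.mp ((abs_re_le_norm s).trans hs)
  have him : |(s + (2 + T * I)).im| ≤ |T| + 2 := by
    have := (abs_im_le_norm s).trans hs
    simp only [add_im, mul_im, I_re, I_im, ofReal_re, ofReal_im, im_ofNat]
    norm_num at this ⊢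
    linarith [abs_add_le s.im T]
  calc ‖f (s + (2 + T * I))‖
      ≤ A * (1 + |(s + (2 + T * I)).im|) ^ 2 :=
        hf.norm_le _ (by simp; linarith) (by simp; linarith)
    _ ≤ A * (|T| + 3) ^ 2 := by
        have : 1 + |(s + (2 + T * I)).im| ≤ |T| + 3 := by linarith
        gcongr
    _ = 1 / A * (A ^ 2 * (|T| + 3) ^ 2) := by field_simp
    _ ≤ _ := mul_le_mul (hf.le_norm T) (mul_sq_le_exp_mul_log hA T) (by positivity)
        (norm_nonneg _)

/-- The constants `1.81 < 1.85 < 1.9` are such that the disc of radius `1.81` about `2 + T * I`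
contains the rectangle `1/2 < re s ≤ 1`, `T ≤ im s ≤ T + 1`. -/
lemma exists_logDeriv_sub_sum_le (hf : IsRiemannType f A) :
    ∃ C : ℝ, 0 < C ∧ ∀ T : ℝ, ∃ (n : ℕ) (Z : Fin n → ℂ), n ≤ C * Real.log (|T| + 2) ∧
      (∀ i, (Z i).re ≤ 1 / 2) ∧ ∀ s : ℂ, ‖s - (2 + T * I)‖ ≤ 1.81 → 1 / 2 < s.re →
        ‖logDeriv f s - ∑ i, 1 / (s - Z i)‖ ≤ C * Real.log (|T| + 2) := by
  set K := 2 * Real.log A / Real.log 2 + 4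
  have hK : 0 < K := by
    have := Real.log_nonneg hf.one_le
    positivity
  have hlogR : 0 < Real.log ((1.9 : ℝ) / 1.85) := Real.log_pos (by norm_num)
  set D := K / Real.log ((1.9 : ℝ) / 1.85)
  set B := 8 * K * 1.85 / (1.85 - 1.81) ^ 2 + D * (1.85 / (1.9 ^ 2 - 1.85 ^ 2))
  have hD : 0 < D := by positivity
  have hB : 0 < B := by
    unfold B
    norm_num
    positivity
  refine ⟨D + B, by positivity, fun T => ?_⟩
  have hlogT := log_abs_add_two_pos T
  have hf0 : f (0 + (2 + T * I)) ≠ 0 := hf.ne_zero _ (by norm_num)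
  obtain ⟨n, Z, hn, hZ, hlog⟩ := _root_.exists_logDeriv_sub_sum_le
    (f := fun s => f (s + (2 + T * I))) (r := 1.81) (R := 1.85) (R' := 1.9) (by norm_num)
    (by norm_num) (by norm_num) (hf.differentiable.comp (by fun_prop)) hf0
    (mul_pos hK hlogT) (fun s hs => by simpa only [zero_add] using hf.norm_add_le_mul_exp T hs)
  replace hn : n ≤ D * Real.log (|T| + 2) := by
    rwa [div_mul_eq_mul_div, le_div_iff₀ hlogR]
  refine ⟨n, fun i => Z i + (2 + T * I), hn.trans (by gcongr; linarith),
    fun i => not_lt.mp fun hi => hf.ne_zero _ hi (hZ i), fun s hs hre => ?_⟩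
  have hlog_s := hlog (s - (2 + T * I)) hs (by simpa using hf.ne_zero s hre)
  rw [logDeriv_apply, deriv_comp_add_const, sub_add_cancel, ← logDeriv_apply] at hlog_s
  simp only [← sub_sub, sub_right_comm _ (Z _)] at hlog_s ⊢
  calc _ ≤ _ := hlog_s
    _ ≤ 8 * (K * Real.log (|T| + 2)) * 1.85 / (1.85 - 1.81) ^ 2 +
          D * Real.log (|T| + 2) * (1.85 / (1.9 ^ 2 - 1.85 ^ 2)) := by gcongr
    _ = B * Real.log (|T| + 2) := by ring
    _ ≤ (D + B) * Real.log (|T| + 2) := by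
      gcongr
      linarith

lemma exists_norm_logDeriv_le (hf : IsRiemannType f A) :
    ∃ C : ℝ, 0 < C ∧ ∀ s : ℂ, 1 / 2 < s.re → s.re ≤ 2 →
      ‖logDeriv f s‖ ≤ C * (1 + 1 / (s.re - 1 / 2)) * Real.log (|s.im| + 2) := by
  obtain ⟨C, hC, h⟩ := hf.exists_logDeriv_sub_sum_le
  refine ⟨C, hC, fun s hs hs2 => ?_⟩
  obtain ⟨n, Z, hn, hZ, hlog⟩ := h s.im
  have hdist : ‖s - (2 + s.im * I)‖ ≤ 1.81 := by
    have : s - (2 + s.im * I) = (s.re - 2 : ℝ) := by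
      apply Complex.ext <;> simp
    rw [this, norm_real, Real.norm_eq_abs, abs_le]
    constructor <;> linarith
  have hpos : 0 < s.re - 1 / 2 := by linarith
  have hterm (i : Fin n) : ‖1 / (s - Z i)‖ ≤ 1 / (s.re - 1 / 2) := by
    rw [norm_div, norm_one]
    have := re_le_norm (s - Z i)
    rw [sub_re] at this
    exact one_div_le_one_div_of_le hpos (by linarith [hZ i])
  calc ‖logDeriv f s‖ ≤ ‖logDeriv f s - ∑ i, 1 / (s - Z i)‖ + ‖∑ i, 1 / (s - Z i)‖ :=
        norm_le_norm_sub_add _ _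
    _ ≤ C * Real.log (|s.im| + 2) + n * (1 / (s.re - 1 / 2)) := by
        refine add_le_add (hlog s hdist hs) ((norm_sum_le_of_le _ fun i _ => hterm i).trans ?_)
        simp
    _ ≤ C * Real.log (|s.im| + 2) + C * Real.log (|s.im| + 2) * (1 / (s.re - 1 / 2)) := by
        gcongr
    _ = _ := by ring

end IsRiemannType

lemma re_one_div_vertical_sub (σ t : ℝ) (ρ : ℂ) :
    (1 / (σ + t * I - ρ)).re = (σ - ρ.re) / ((σ - ρ.re) ^ 2 + (t - ρ.im) ^ 2) := by
  rw [one_div, inv_re, normSq_apply]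
  simp [sq]

lemma continuous_re_one_div_vertical_sub {σ : ℝ} {ρ : ℂ} (hρ : ρ.re < σ) :
    Continuous fun t : ℝ => (1 / (σ + t * I - ρ)).re := by
  have : 0 < σ - ρ.re := sub_pos.mpr hρ
  simp only [re_one_div_vertical_sub]
  exact .div (by fun_prop) (by fun_prop) fun t => by positivity

lemma integral_re_one_div_vertical_sub_le_pi {σ : ℝ} {ρ : ℂ} (hρ : ρ.re < σ) (a b : ℝ) :
    ∫ t in a..b, (1 / (σ + t * I - ρ)).re ≤ Real.pi := by
  have hderiv (t : ℝ) : HasDerivAt (fun t : ℝ => Real.arctan ((t - ρ.im) / (σ - ρ.re)))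
      (1 / (σ + t * I - ρ)).re t := by
    have hσ : 0 < σ - ρ.re := sub_pos.mpr hρ
    refine (((hasDerivAt_id t).sub_const _).div_const _).arctan.congr_deriv ?_
    rw [re_one_div_vertical_sub]
    simp only [id]
    field_simp
  rw [intervalIntegral.integral_eq_sub_of_hasDerivAt (fun t _ => hderiv t)
    ((continuous_re_one_div_vertical_sub hρ).intervalIntegrable _ _)]
  linarith [Real.arctan_lt_pi_div_two ((b - ρ.im) / (σ - ρ.re)),
    Real.neg_pi_div_two_lt_arctan ((a - ρ.im) / (σ - ρ.re))]

lemma norm_vertical_sub_le {σ T t : ℝ} (hσ : 1 / 2 < σ) (hσ1 : σ ≤ 1) (ht : t ∈ Icc T (T + 1)) :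
    ‖σ + t * I - (2 + T * I)‖ ≤ 1.81 := by
  have : (σ + t * I - (2 + T * I) : ℂ) = (σ - 2 : ℝ) + (t - T : ℝ) * I := by
    push_cast
    ring
  rw [this, norm_add_mul_I, Real.sqrt_le_left (by norm_num)]
  nlinarith [ht.1, ht.2]

/-- Unlike the integral of the modulus, that of the real part stays bounded as `σ → 1/2`: on the
line, each zero contributes a Poisson kernel, whose total mass is `π`. -/
lemma IsRiemannType.exists_integral_abs_re_logDeriv_le {f : ℂ → ℂ} {A : ℝ}
    (hf : IsRiemannType f A) :
    ∃ C : ℝ, 0 < C ∧ ∀ σ : ℝ, 1 / 2 < σ → σ ≤ 1 → ∀ T : ℝ,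
      ∫ t in T..(T + 1), |(logDeriv f (σ + t * I)).re| ≤ C * Real.log (|T| + 2) := by
  obtain ⟨C, hC, h⟩ := hf.exists_logDeriv_sub_sum_le
  refine ⟨C + C * Real.pi, by positivity, fun σ hσ hσ1 T => ?_⟩
  obtain ⟨n, Z, hn, hZ, hlog⟩ := h T
  have hZσ (i : Fin n) : (Z i).re < σ := (hZ i).trans_lt hσ
  have hpoint : ∀ t ∈ Icc T (T + 1), |(logDeriv f (σ + t * I)).re| ≤
      C * Real.log (|T| + 2) + ∑ i, (1 / (σ + t * I - Z i)).re := by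
    intro t ht
    have hnorm := (abs_re_le_norm _).trans
      (hlog _ (norm_vertical_sub_le hσ hσ1 ht) (by simpa using hσ))
    have hsum : 0 ≤ ∑ i, (1 / (σ + t * I - Z i)).re := Finset.sum_nonneg fun i _ => by
      rw [re_one_div_vertical_sub]
      exact div_nonneg (sub_nonneg.mpr (hZσ i).le) (by positivity)
    rw [sub_re, re_sum, abs_le] at hnorm
    rw [abs_le]
    constructor <;> linarith
  have hcont (i : Fin n) := continuous_re_one_div_vertical_sub (hZσ i)
  have hlogf := (continuous_re.comp (hf.continuous_logDeriv_vertical hσ)).abs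
  calc _ ≤ ∫ t in T..(T + 1), (C * Real.log (|T| + 2) + ∑ i, (1 / (σ + t * I - Z i)).re) :=
        intervalIntegral.integral_mono_on (by linarith) (hlogf.intervalIntegrable _ _)
          (Continuous.intervalIntegrable (by fun_prop) _ _) hpoint
    _ = C * Real.log (|T| + 2) + ∑ i, ∫ t in T..(T + 1), (1 / (σ + t * I - Z i)).re := by
        rw [intervalIntegral.integral_add intervalIntegrable_const
            (Continuous.intervalIntegrable (by fun_prop) _ _),
          intervalIntegral.integral_finsetSum fun i _ => (hcont i).intervalIntegrable _ _]
        simp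
    _ ≤ C * Real.log (|T| + 2) + n * Real.pi := by
        gcongr
        refine (Finset.sum_le_sum fun i _ =>
          integral_re_one_div_vertical_sub_le_pi (hZσ i) _ _).trans ?_
        simp
    _ ≤ C * Real.log (|T| + 2) + C * Real.log (|T| + 2) * Real.pi := by gcongr
    _ = _ := by ring

end RiemannType

section VerticalLines

open Complex Filter Topology

lemma integrable_one_add_abs_rpow_neg {r : ℝ} (hr : 1 < r) :
    Integrable fun t : ℝ => (1 + |t|) ^ (-r) := by
  simpa using integrable_one_add_norm (E := ℝ) (μ := volume) (r := r) (by simpa)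

lemma integrable_of_norm_le_one_add_abs_rpow {g : ℝ → ℂ} {r K : ℝ} (hr : 1 < r)
    (hg : Continuous g) (hgK : ∀ t, ‖g t‖ ≤ K * (1 + |t|) ^ (-r)) : Integrable g :=
  ((integrable_one_add_abs_rpow_neg hr).const_mul K).mono' hg.aestronglyMeasurable
    (Eventually.of_forall hgK)

variable {H : ℂ → ℂ} {a b r K : ℝ}

lemma tendsto_integral_horizontal_cocompact (hab : a ≤ b) (hr : 0 < r)
    (hHK : ∀ s : ℂ, s.re ∈ Icc a b → ‖H s‖ ≤ K * (1 + |s.im|) ^ (-r)) :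
    Tendsto (fun T : ℝ => ∫ x in a..b, H (x + T * I)) (cocompact ℝ) (𝓝 0) := by
  have hdecay : Tendsto (fun T : ℝ => K * (1 + |T|) ^ (-r) * |b - a|) (cocompact ℝ) (𝓝 0) := by
    have := (tendsto_rpow_neg_atTop hr).comp
      (tendsto_atTop_add_const_left _ (1 : ℝ) (tendsto_norm_cocompact_atTop (E := ℝ)))
    simpa using (this.const_mul K).mul_const |b - a|
  refine squeeze_zero_norm (fun T => ?_) hdecay
  refine intervalIntegral.norm_integral_le_of_norm_le_const fun x hx => ?_
  rw [uIoc_of_le hab] at hx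
  simpa using hHK (x + T * I) (by simpa using Ioc_subset_Icc_self hx)

lemma continuous_vertical (hH : DifferentiableOn ℂ H (re ⁻¹' Icc a b)) {σ : ℝ}
    (hσ : σ ∈ Icc a b) : Continuous fun t : ℝ => H (σ + t * I) :=
  hH.continuousOn.comp_continuous (by fun_prop) fun t => by simpa using hσ

theorem integral_vertical_eq (hab : a ≤ b) (hr : 1 < r)
    (hH : DifferentiableOn ℂ H (re ⁻¹' Icc a b))
    (hHK : ∀ s : ℂ, s.re ∈ Icc a b → ‖H s‖ ≤ K * (1 + |s.im|) ^ (-r)) :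
    ∫ t : ℝ, H (a + t * I) = ∫ t : ℝ, H (b + t * I) := by
  have hvert {σ : ℝ} (hσ : σ ∈ Icc a b) : Tendsto (fun T => ∫ t in -T..T, H (σ + t * I)) atTop
      (𝓝 (∫ t : ℝ, H (σ + t * I))) :=
    intervalIntegral_tendsto_integral
      (integrable_of_norm_le_one_add_abs_rpow (K := K) hr (continuous_vertical hH hσ)
        fun t => by simpa using hHK (σ + t * I) (by simpa using hσ))
      tendsto_neg_atTop_atBot tendsto_id
  have hhoriz := tendsto_integral_horizontal_cocompact hab (one_pos.trans hr) hHK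
  have htop := hhoriz.mono_left atTop_le_cocompact
  have hbot := (hhoriz.mono_left atBot_le_cocompact).comp tendsto_neg_atTop_atBot
  have hrect (T : ℝ) : ((∫ x in a..b, H (x + ((-T : ℝ) : ℂ) * I)) - ∫ x in a..b, H (x + T * I))
      + I • (∫ t in -T..T, H (b + t * I)) - I • ∫ t in -T..T, H (a + t * I) = 0 := by
    refine integral_boundary_rect_eq_zero_of_differentiableOn H ⟨a, -T⟩ ⟨b, T⟩
      (hH.mono fun s hs => ?_)
    simpa [uIcc_of_le hab] using (mem_reProdIm.mp hs).1
  have hlim := ((hbot.sub htop).add ((hvert (right_mem_Icc.mpr hab)).const_smul I)).sub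
    ((hvert (left_mem_Icc.mpr hab)).const_smul I)
  have hzero := tendsto_nhds_unique (hlim.congr hrect) tendsto_const_nhds
  rw [sub_zero, zero_add, ← smul_sub] at hzero
  exact (sub_eq_zero.mp ((smul_eq_zero.mp hzero).resolve_left I_ne_zero)).symm

end VerticalLines

section MellinTransform

open Complex Filter Topology

lemma integral_mellin_mul_cpow_neg {f : ℝ → ℂ} {σ v : ℝ} (hv : 0 < v)
    (hf : MellinConvergent f σ) (hfσ : VerticalIntegrable (mellin f) σ)
    (hfv : ContinuousAt f v) :
    ∫ t : ℝ, mellin f (σ + t * I) * (v : ℂ) ^ (-(σ + t * I : ℂ)) = 2 * Real.pi * f v := by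
  have hpi : (2 * Real.pi : ℂ) * ((1 / (2 * Real.pi) : ℝ) : ℂ) = 1 := by
    rw [← ofReal_ofNat, ← ofReal_mul, ← ofReal_mul, mul_one_div_cancel Real.two_pi_pos.ne',
      ofReal_one]
  rw [← mellinInv_mellin_eq σ f hv hf hfσ hfv, mellinInv, real_smul, ← mul_assoc, hpi, one_mul]
  simp only [smul_eq_mul, mul_comm (mellin f _)]

lemma hasMellin_congr_on {f g : ℝ → ℂ} {s m : ℂ} (hf : HasMellin f s m)
    (hfg : EqOn f g (Ioi 0)) : HasMellin g s m := by
  have hEq : EqOn (fun v : ℝ => (v : ℂ) ^ (s - 1) • f v) (fun v : ℝ => (v : ℂ) ^ (s - 1) • g v)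
      (Ioi 0) := fun v hv => by simp only [hfg hv]
  exact ⟨hf.1.congr_fun hEq measurableSet_Ioi,
    (setIntegral_congr_fun measurableSet_Ioi hEq).symm.trans hf.2⟩

lemma hasMellin_indicator_Ioc_cpow {Y : ℝ} (hY : 0 < Y) {a s : ℂ} (has : 0 < s.re + a.re) :
    HasMellin (indicator (Ioc 0 Y) fun v : ℝ => (v : ℂ) ^ a) s
      ((Y : ℂ) ^ (s + a) / (s + a)) := by
  have hre : -1 < (s - 1 + a).re := by simpa using by linarith
  have hEq : EqOn (fun v : ℝ => (v : ℂ) ^ (s - 1) • (v : ℂ) ^ a)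
      (fun v : ℝ => (v : ℂ) ^ (s - 1 + a)) (Ioc 0 Y) := fun v hv => by
    simp only [smul_eq_mul]
    rw [cpow_add _ _ (ofReal_ne_zero.mpr hv.1.ne')]
  have hind : (fun v : ℝ => (v : ℂ) ^ (s - 1) • indicator (Ioc 0 Y) (fun v : ℝ => (v : ℂ) ^ a) v)
      = indicator (Ioc 0 Y) fun v : ℝ => (v : ℂ) ^ (s - 1) • (v : ℂ) ^ a :=
    (indicator_smul _ _ _).symm
  constructor
  · rw [MellinConvergent, hind, integrableOn_indicator_iff measurableSet_Ioc,
      inter_eq_self_of_subset_left Ioc_subset_Ioi_self, integrableOn_congr_fun hEq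
      measurableSet_Ioc, ← intervalIntegrable_iff_integrableOn_Ioc_of_le hY.le]
    exact intervalIntegral.intervalIntegrable_cpow' hre
  · have hne : s + a ≠ 0 := fun h => has.ne' (by simpa using congrArg re h)
    rw [mellin, hind, setIntegral_indicator measurableSet_Ioc,
      inter_eq_self_of_subset_right Ioc_subset_Ioi_self,
      setIntegral_congr_fun measurableSet_Ioc hEq, ← intervalIntegral.integral_of_le hY.le,
      integral_cpow (Or.inl hre), show s - 1 + a + 1 = s + a by ring, ofReal_zero, zero_cpow hne,
      sub_zero]

lemma hasMellin_max_sub_zero {Y : ℝ} (hY : 0 < Y) {s : ℂ} (hs : 0 < s.re) :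
    HasMellin (fun v : ℝ => ((max (Y - v) 0 : ℝ) : ℂ)) s ((Y : ℂ) ^ (s + 1) / (s * (s + 1))) := by
  have hYne : (Y : ℂ) ≠ 0 := ofReal_ne_zero.mpr hY.ne'
  have hs0 : s ≠ 0 := ne_zero_of_re_pos hs
  have hs1 : s + 1 ≠ 0 := ne_zero_of_re_pos (by simpa using by linarith)
  have hconst := hasMellin_indicator_Ioc_cpow hY (a := 0) (s := s) (by simpa)
  have hid := hasMellin_indicator_Ioc_cpow hY (a := 1) (s := s) (by simpa using by linarith)
  have hsmul := hasMellin_const_smul hconst.1 (Y : ℂ)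
  have hsub := hasMellin_sub hsmul.1 hid.1
  rw [hsmul.2, hconst.2, hid.2] at hsub
  convert hasMellin_congr_on hsub (g := fun v : ℝ => ((max (Y - v) 0 : ℝ) : ℂ))
    fun v hv => ?_ using 1
  · rw [cpow_add _ _ hYne, add_zero, cpow_one, smul_eq_mul]
    field_simp
    ring
  · rw [mem_Ioi] at hv
    rcases le_or_gt v Y with hvY | hvY
    · simp [hv, hvY]
    · simp [hvY.not_ge, hvY.le]

lemma hasMellin_max_sub_zero_sq_div {Y : ℝ} (hY : 0 < Y) {s : ℂ} (hs : 1 < s.re) :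
    HasMellin (fun v : ℝ => (((max (Y - v) 0) ^ 2 / (2 * v) : ℝ) : ℂ)) s
      ((Y : ℂ) ^ (s + 1) / (s * (s + 1)) / (s - 1)) := by
  have hYne : (Y : ℂ) ≠ 0 := ofReal_ne_zero.mpr hY.ne'
  have hs0 : s ≠ 0 := ne_zero_of_re_pos (by linarith)
  have hs1 : s + 1 ≠ 0 := ne_zero_of_re_pos (by simpa using by linarith)
  have hs1' : s - 1 ≠ 0 := ne_zero_of_re_pos (by simpa using by linarith)
  have hinv := hasMellin_indicator_Ioc_cpow hY (a := -1) (s := s) (by simpa using by linarith)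
  have hconst := hasMellin_indicator_Ioc_cpow hY (a := 0) (s := s) (by simpa using by linarith)
  have hid := hasMellin_indicator_Ioc_cpow hY (a := 1) (s := s) (by simpa using by linarith)
  have hinv' := hasMellin_const_smul hinv.1 ((Y : ℂ) ^ 2 / 2)
  have hconst' := hasMellin_const_smul hconst.1 (Y : ℂ)
  have hid' := hasMellin_const_smul hid.1 (1 / 2 : ℂ)
  have hsub := hasMellin_sub hinv'.1 hconst'.1
  have hadd := hasMellin_add hsub.1 hid'.1
  rw [hsub.2, hinv'.2, hconst'.2, hid'.2, hinv.2, hconst.2, hid.2] at hadd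
  convert hasMellin_congr_on hadd
    (g := fun v : ℝ => (((max (Y - v) 0) ^ 2 / (2 * v) : ℝ) : ℂ)) fun v hv => ?_ using 1
  · simp only [← sub_eq_add_neg, cpow_sub _ _ hYne, cpow_add _ _ hYne, add_zero, cpow_one,
      smul_eq_mul]
    field_simp
    ring
  · rw [mem_Ioi] at hv
    have hvne : (v : ℂ) ≠ 0 := ofReal_ne_zero.mpr hv.ne'
    rcases le_or_gt v Y with hvY | hvY
    · simp [hv, hvY, cpow_neg_one]
      field_simp
      ring
    · simp [hvY.not_ge, hvY.le]

end MellinTransform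

section Trapezoid

open Complex Filter Topology ComplexConjugate

/-- The cutoff function equal to `1` on `(-∞, x]`, to `0` on `[x + h, ∞)` and affine in between. -/
noncomputable def trapezoid (x h v : ℝ) : ℝ := (max (x + h - v) 0 - max (x - v) 0) / h

/-- The Mellin transform of `trapezoid x h`, as a meromorphic function of `s`. -/
noncomputable def trapezoidMellin (x h : ℝ) (s : ℂ) : ℂ :=
  (((x + h : ℝ) : ℂ) ^ (s + 1) - (x : ℂ) ^ (s + 1)) / (h * (s * (s + 1)))

lemma trapezoid_of_le {x h v : ℝ} (hh : 0 < h) (hv : v ≤ x) : trapezoid x h v = 1 := by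
  rw [trapezoid, max_eq_left (by linarith), max_eq_left (by linarith)]
  field_simp
  ring

lemma trapezoid_nonneg {x h : ℝ} (hh : 0 < h) (v : ℝ) : 0 ≤ trapezoid x h v :=
  div_nonneg (sub_nonneg.mpr (max_le_max_right 0 (by linarith))) hh.le

lemma trapezoid_of_ge {x h v : ℝ} (hh : 0 < h) (hv : x + h ≤ v) : trapezoid x h v = 0 := by
  rw [trapezoid, max_eq_right (by linarith), max_eq_right (by linarith), sub_zero, zero_div]

variable {x h : ℝ} {s : ℂ}

lemma trapezoidMellin_eq_sub_div :
    trapezoidMellin x h s = (h : ℂ)⁻¹ • (((x + h : ℝ) : ℂ) ^ (s + 1) / (s * (s + 1)) -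
      (x : ℂ) ^ (s + 1) / (s * (s + 1))) := by
  rw [trapezoidMellin, ← sub_div, smul_eq_mul, inv_mul_eq_div, div_div, mul_comm (h : ℂ)]

lemma hasMellin_trapezoid (hx : 0 < x) (hh : 0 < h) (hs : 0 < s.re) :
    HasMellin (fun v => (trapezoid x h v : ℂ)) s (trapezoidMellin x h s) := by
  have hsub := hasMellin_sub (hasMellin_max_sub_zero (add_pos hx hh) hs).1
    (hasMellin_max_sub_zero hx hs).1
  have hsmul := hasMellin_const_smul hsub.1 (h : ℂ)⁻¹
  rw [hsub.2, (hasMellin_max_sub_zero (add_pos hx hh) hs).2, (hasMellin_max_sub_zero hx hs).2,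
    ← trapezoidMellin_eq_sub_div] at hsmul
  convert hsmul using 3 with v
  rw [trapezoid, smul_eq_mul, inv_mul_eq_div]
  push_cast
  rfl

lemma hasMellin_sub_sq_div (hx : 0 < x) (hh : 0 < h) (hs : 1 < s.re) :
    HasMellin
      (fun v => (((max (x + h - v) 0 ^ 2 - max (x - v) 0 ^ 2) / (2 * h * v) : ℝ) : ℂ)) s
      (trapezoidMellin x h s / (s - 1)) := by
  have hadd := hasMellin_max_sub_zero_sq_div (add_pos hx hh) hs
  have hsub := hasMellin_sub hadd.1 (hasMellin_max_sub_zero_sq_div hx hs).1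
  have hsmul := hasMellin_const_smul hsub.1 (h : ℂ)⁻¹
  rw [hsub.2, hadd.2, (hasMellin_max_sub_zero_sq_div hx hs).2, ← sub_div, ← smul_div_assoc,
    ← trapezoidMellin_eq_sub_div] at hsmul
  convert hsmul using 2 with v
  rw [smul_eq_mul, ← ofReal_sub, ← sub_div, ← ofReal_inv, ← ofReal_mul, inv_mul_eq_div, div_div]
  ring_nf

lemma differentiableAt_trapezoidMellin (hx : 0 < x) (hh : 0 < h) (hs : 0 < s.re) :
    DifferentiableAt ℂ (trapezoidMellin x h) s := by
  have hpow {Y : ℝ} (hY : 0 < Y) : DifferentiableAt ℂ (fun s : ℂ => (Y : ℂ) ^ (s + 1)) s :=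
    DifferentiableAt.const_cpow (by fun_prop) (Or.inl (ofReal_ne_zero.mpr hY.ne'))
  refine ((hpow (add_pos hx hh)).sub (hpow hx)).div (by fun_prop) ?_
  exact mul_ne_zero (ofReal_ne_zero.mpr hh.ne') (mul_ne_zero (ne_zero_of_re_pos hs)
    (ne_zero_of_re_pos (by simpa using by linarith)))

lemma trapezoidMellin_conj (hx : 0 < x) (hh : 0 < h) (s : ℂ) :
    trapezoidMellin x h (conj s) = conj (trapezoidMellin x h s) := by
  have hpow {Y : ℝ} (hY : 0 < Y) : (Y : ℂ) ^ (conj s + 1) = conj ((Y : ℂ) ^ (s + 1)) := by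
    have harg : arg (Y : ℂ) ≠ Real.pi := by
      rw [arg_ofReal_of_nonneg hY.le]
      exact Real.pi_ne_zero.symm
    simpa using cpow_conj (Y : ℂ) (s + 1) harg
  simp only [trapezoidMellin, map_div₀, map_sub, map_mul, map_add, map_one, conj_ofReal,
    hpow (add_pos hx hh), hpow hx]

lemma norm_trapezoidMellin_le (hx : 0 < x) (hh : 0 < h) (hs : 0 < s.re) :
    ‖trapezoidMellin x h s‖ ≤ (x + h) ^ s.re / ‖s‖ := by
  have hs0 : s ≠ 0 := ne_zero_of_re_pos hs
  have hs1 : s + 1 ≠ 0 := ne_zero_of_re_pos (by simpa using by linarith)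
  have hhne : (h : ℂ) ≠ 0 := ofReal_ne_zero.mpr hh.ne'
  have hint : trapezoidMellin x h s = (∫ u in x..(x + h), (u : ℂ) ^ s) / h / s := by
    rw [integral_cpow (Or.inl (by linarith)), trapezoidMellin]
    field_simp
  have hle : ‖∫ u in x..(x + h), (u : ℂ) ^ s‖ ≤ (x + h) ^ s.re * |x + h - x| := by
    refine intervalIntegral.norm_integral_le_of_norm_le_const fun u hu => ?_
    rw [uIoc_of_le (by linarith)] at hu
    have hu0 : 0 < u := hx.trans hu.1
    rw [norm_cpow_eq_rpow_re_of_pos hu0]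
    exact Real.rpow_le_rpow hu0.le hu.2 hs.le
  rw [add_sub_cancel_left, abs_of_pos hh] at hle
  rw [hint, norm_div, norm_div, norm_real, Real.norm_of_nonneg hh.le]
  gcongr
  rwa [div_le_iff₀ hh]

lemma norm_trapezoidMellin_le_div_sq (hx : 0 < x) (hh : 0 < h) (hs : 0 < s.re) :
    ‖trapezoidMellin x h s‖ ≤ 2 * (x + h) ^ (s.re + 1) / (h * ‖s‖ ^ 2) := by
  have hs0 : 0 < ‖s‖ := norm_pos_iff.mpr (ne_zero_of_re_pos hs)
  have hpow {Y : ℝ} (hY : 0 < Y) (hYx : Y ≤ x + h) :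
      ‖(Y : ℂ) ^ (s + 1)‖ ≤ (x + h) ^ (s.re + 1) := by
    rw [norm_cpow_eq_rpow_re_of_pos hY, add_re, one_re]
    exact Real.rpow_le_rpow hY.le hYx (by linarith)
  have hadd_one : ‖s‖ ≤ ‖s + 1‖ := by
    rw [norm_def, norm_def, normSq_apply, normSq_apply]
    refine Real.sqrt_le_sqrt ?_
    simp only [add_re, one_re, add_im, one_im, add_zero]
    nlinarith
  rw [trapezoidMellin, norm_div, norm_mul, norm_mul, norm_real, Real.norm_of_nonneg hh.le, sq]
  gcongr
  refine (norm_sub_le _ _).trans ?_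
  linarith [hpow (add_pos hx hh) le_rfl, hpow hx (by linarith)]

lemma mul_one_add_abs_im_le_norm {a : ℝ} (ha1 : a ≤ 1) (hs : a ≤ s.re) :
    a / 2 * (1 + |s.im|) ≤ ‖s‖ := by
  nlinarith [abs_re_le_norm s, abs_im_le_norm s, le_abs_self s.re, abs_nonneg s.im]

lemma norm_trapezoidMellin_le_rpow {a b : ℝ} (hx : 1 ≤ x) (hh : 0 < h) (ha : 0 < a) (ha1 : a ≤ 1)
    (hs : s.re ∈ Icc a b) :
    ‖trapezoidMellin x h s‖ ≤ 8 * (x + h) ^ (b + 1) / (h * a ^ 2) * (1 + |s.im|) ^ (-2 : ℝ) := by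
  have him := abs_nonneg s.im
  have : 0 < x + h := by linarith
  calc ‖trapezoidMellin x h s‖ ≤ 2 * (x + h) ^ (s.re + 1) / (h * ‖s‖ ^ 2) :=
        norm_trapezoidMellin_le_div_sq (by linarith) hh (ha.trans_le hs.1)
    _ ≤ 2 * (x + h) ^ (b + 1) / (h * (a / 2 * (1 + |s.im|)) ^ 2) := by
        gcongr
        · linarith
        · exact hs.2
        · exact mul_one_add_abs_im_le_norm ha1 hs.1
    _ = _ := by
        rw [Real.rpow_neg (by linarith), Real.rpow_ofNat]
        field_simp
        norm_num

lemma continuous_trapezoidMellin_vertical (hx : 0 < x) (hh : 0 < h) {σ : ℝ} (hσ : 0 < σ) :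
    Continuous fun t : ℝ => trapezoidMellin x h (σ + t * I) :=
  continuous_iff_continuousAt.mpr fun t => ContinuousAt.comp (f := fun t : ℝ => (σ + t * I : ℂ))
    (differentiableAt_trapezoidMellin hx hh (by simpa using hσ)).continuousAt (by fun_prop)

lemma integrable_trapezoidMellin_vertical (hx : 1 ≤ x) (hh : 0 < h) {σ : ℝ} (hσ : 0 < σ) :
    Integrable fun t : ℝ => trapezoidMellin x h (σ + t * I) :=
  integrable_of_norm_le_one_add_abs_rpow one_lt_two
    (continuous_trapezoidMellin_vertical (by linarith) hh hσ) fun t => by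
      simpa using norm_trapezoidMellin_le_rpow (s := σ + t * I) (b := σ) hx hh
        (lt_min one_pos hσ) (min_le_left _ _) (by simp)

lemma integrable_trapezoidMellin_div_vertical (hx : 1 ≤ x) (hh : 0 < h) {σ : ℝ} (hσ : 1 < σ) :
    Integrable fun t : ℝ => trapezoidMellin x h (σ + t * I) / (σ + t * I - 1) := by
  have hre (t : ℝ) : (σ + t * I - 1 : ℂ).re = σ - 1 := by simp
  have hσ1 : 0 < σ - 1 := sub_pos.mpr hσ
  have hcont : Continuous fun t : ℝ => (σ + t * I - 1 : ℂ)⁻¹ :=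
    Continuous.inv₀ (by fun_prop) fun t => ne_zero_of_re_pos (by rwa [hre])
  have hbdd (t : ℝ) : ‖(σ + t * I - 1 : ℂ)⁻¹‖ ≤ (σ - 1)⁻¹ := by
    rw [norm_inv]
    exact inv_anti₀ hσ1 ((hre t).symm.le.trans (re_le_norm _))
  simp only [div_eq_mul_inv]
  exact (integrable_trapezoidMellin_vertical hx hh (one_pos.trans hσ)).mul_bdd
    hcont.aestronglyMeasurable (Eventually.of_forall hbdd)

theorem integral_trapezoidMellin_mul_cpow_neg (hx : 1 ≤ x) (hh : 0 < h) {σ v : ℝ} (hσ : 0 < σ)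
    (hv : 0 < v) :
    ∫ t : ℝ, trapezoidMellin x h (σ + t * I) * (v : ℂ) ^ (-(σ + t * I : ℂ)) =
      2 * Real.pi * trapezoid x h v := by
  have hmellin (t : ℝ) : HasMellin (fun v => (trapezoid x h v : ℂ)) (σ + t * I)
      (trapezoidMellin x h (σ + t * I)) :=
    hasMellin_trapezoid (by linarith) hh (by simpa using hσ)
  rw [← integral_mellin_mul_cpow_neg (f := fun v => (trapezoid x h v : ℂ)) (σ := σ) hv]
  · simp only [(hmellin _).2]
  · simpa using (hmellin 0).1
  · rw [VerticalIntegrable]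
    simpa only [(hmellin _).2] using integrable_trapezoidMellin_vertical hx hh hσ
  · unfold trapezoid
    fun_prop

theorem integral_trapezoidMellin_div_sub_one (hx : 1 ≤ x) (hh : 0 < h) {σ : ℝ} (hσ : 1 < σ) :
    ∫ t : ℝ, trapezoidMellin x h (σ + t * I) / (σ + t * I - 1) =
      2 * Real.pi * (x - 1 + h / 2 : ℝ) := by
  have hmellin (t : ℝ) := hasMellin_sub_sq_div (s := σ + t * I) (zero_lt_one.trans_le hx) hh
    (by simpa using hσ)
  have hconv := (hmellin 0).1
  rw [ofReal_zero, zero_mul, add_zero] at hconv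
  have hinv := integral_mellin_mul_cpow_neg (σ := σ) one_pos hconv
    (by simpa only [VerticalIntegrable, (hmellin _).2] using
      integrable_trapezoidMellin_div_vertical hx hh hσ)
    (continuous_ofReal.continuousAt.comp
      (ContinuousAt.div (by fun_prop) (by fun_prop) (by simpa using hh.ne')))
  simp only [(hmellin _).2, ofReal_one, one_cpow, mul_one] at hinv
  rw [hinv, max_eq_left (by linarith), max_eq_left (by linarith)]
  congr 2
  field_simp
  ring

end Trapezoid

section DecayWeights

open Complex Filter Topology

lemma continuous_one_add_abs_rpow (r : ℝ) : Continuous fun t : ℝ => (1 + |t|) ^ r :=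
  Continuous.rpow_const (by fun_prop) fun t => Or.inl (by positivity)

lemma integral_one_add_abs_rpow_neg {η : ℝ} (hη : 0 < η) :
    ∫ t : ℝ, (1 + |t|) ^ (-(1 + η)) = 2 / η := by
  have hshift := (measurePreserving_add_left volume (1 : ℝ)).setIntegral_preimage_emb
    (measurableEmbedding_addLeft 1) (fun t => t ^ (-(1 + η))) (Ioi 1)
  rw [show (fun t : ℝ => 1 + t) ⁻¹' Ioi 1 = Ioi 0 by ext; simp] at hshift
  rw [integral_comp_abs (f := fun t => (1 + t) ^ (-(1 + η))), hshift,
    integral_Ioi_rpow_of_lt (by linarith) one_pos, Real.one_rpow,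
    show -(1 + η) + 1 = -η by ring]
  field_simp

lemma one_add_abs_rpow_neg_le_four_mul {r s t : ℝ} (hr : 0 ≤ r) (hr2 : r ≤ 2) (hst : |s - t| ≤ 1) :
    (1 + |t|) ^ (-r) ≤ 4 * (1 + |s|) ^ (-r) := by
  have hcompare : (1 + |s|) / 2 ≤ 1 + |t| := by
    linarith [abs_sub_abs_le_abs_sub s t, abs_nonneg t]
  calc (1 + |t|) ^ (-r) ≤ ((1 + |s|) / 2) ^ (-r) :=
        Real.rpow_le_rpow_of_nonpos (by positivity) hcompare (by linarith)
    _ = 2 ^ r * (1 + |s|) ^ (-r) := by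
        rw [Real.div_rpow (by positivity) zero_le_two, Real.rpow_neg zero_le_two, div_inv_eq_mul,
          mul_comm]
    _ ≤ 4 * (1 + |s|) ^ (-r) := by
        gcongr
        exact (Real.rpow_le_rpow_of_exponent_le one_le_two hr2).trans_eq (by norm_num)

lemma log_abs_add_two_le_rpow {η : ℝ} (hη : 0 < η) (hη1 : η ≤ 1) (T : ℝ) :
    Real.log (|T| + 2) ≤ 2 / η * (1 + |T|) ^ η := by
  have hT := abs_nonneg T
  calc Real.log (|T| + 2) ≤ (|T| + 2) ^ η / η := Real.log_le_rpow_div (by linarith) hη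
    _ ≤ (2 * (1 + |T|)) ^ η / η := by
        gcongr
        linarith
    _ = 2 ^ η / η * (1 + |T|) ^ η := by
        rw [Real.mul_rpow zero_le_two (by linarith)]
        ring
    _ ≤ 2 / η * (1 + |T|) ^ η := by
        gcongr
        simpa using Real.rpow_le_rpow_of_exponent_le one_le_two hη1

lemma log_abs_add_two_mul_rpow_le {δ : ℝ} (hδ : 0 < δ) (hδ1 : δ ≤ 1) (T : ℝ) :
    Real.log (|T| + 2) * (1 + |T|) ^ (-(1 + δ)) ≤ 4 / δ * (1 + |T|) ^ (-(1 + δ / 2)) := by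
  calc Real.log (|T| + 2) * (1 + |T|) ^ (-(1 + δ))
      ≤ 2 / (δ / 2) * (1 + |T|) ^ (δ / 2) * (1 + |T|) ^ (-(1 + δ)) := by
        gcongr
        exact log_abs_add_two_le_rpow (half_pos hδ) (by linarith) T
    _ = 4 / δ * (1 + |T|) ^ (-(1 + δ / 2)) := by
        rw [mul_assoc, ← Real.rpow_add (by positivity)]
        ring_nf

variable {φ : ℝ → ℝ} {C δ : ℝ}

lemma mul_rpow_le_of_le_log (hφ : ∀ t, 0 ≤ φ t) (hφC : ∀ t, φ t ≤ C * Real.log (|t| + 2))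
    (hδ : 0 < δ) (hδ1 : δ ≤ 1) (t : ℝ) :
    φ t * (1 + |t|) ^ (-(1 + δ)) ≤ C * (4 / δ) * (1 + |t|) ^ (-(1 + δ / 2)) := by
  have hC : 0 ≤ C := nonneg_of_mul_nonneg_left ((hφ t).trans (hφC t)) (log_abs_add_two_pos t)
  calc φ t * (1 + |t|) ^ (-(1 + δ))
      ≤ C * Real.log (|t| + 2) * (1 + |t|) ^ (-(1 + δ)) := by
        gcongr
        exact hφC t
    _ = C * (Real.log (|t| + 2) * (1 + |t|) ^ (-(1 + δ))) := mul_assoc _ _ _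
    _ ≤ C * (4 / δ * (1 + |t|) ^ (-(1 + δ / 2))) :=
        mul_le_mul_of_nonneg_left (log_abs_add_two_mul_rpow_le hδ hδ1 t) hC
    _ = _ := (mul_assoc _ _ _).symm

lemma integrable_mul_rpow_of_le_log (hcont : Continuous φ) (hφ : ∀ t, 0 ≤ φ t)
    (hφC : ∀ t, φ t ≤ C * Real.log (|t| + 2)) (hδ : 0 < δ) (hδ1 : δ ≤ 1) :
    Integrable fun t => φ t * (1 + |t|) ^ (-(1 + δ)) := by
  have hint : Integrable fun t : ℝ => (1 + |t|) ^ (-(1 + δ / 2)) :=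
    integrable_one_add_abs_rpow_neg (by linarith)
  refine (hint.const_mul (C * (4 / δ))).mono'
    (hcont.mul (continuous_one_add_abs_rpow _)).aestronglyMeasurable
    (Eventually.of_forall fun t => ?_)
  rw [Real.norm_of_nonneg (mul_nonneg (hφ t) (by positivity))]
  exact mul_rpow_le_of_le_log hφ hφC hδ hδ1 t

lemma integral_mul_rpow_le_of_le_log (hcont : Continuous φ) (hφ : ∀ t, 0 ≤ φ t)
    (hφC : ∀ t, φ t ≤ C * Real.log (|t| + 2)) (hδ : 0 < δ) (hδ1 : δ ≤ 1) :
    ∫ t, φ t * (1 + |t|) ^ (-(1 + δ)) ≤ 16 * C / δ ^ 2 := by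
  have hint : Integrable fun t : ℝ => (1 + |t|) ^ (-(1 + δ / 2)) :=
    integrable_one_add_abs_rpow_neg (by linarith)
  refine (integral_mono (integrable_mul_rpow_of_le_log hcont hφ hφC hδ hδ1)
    (hint.const_mul (C * (4 / δ))) (mul_rpow_le_of_le_log hφ hφC hδ hδ1)).trans_eq ?_
  rw [integral_const_mul, integral_one_add_abs_rpow_neg (half_pos hδ)]
  ring

lemma intervalIntegral_mul_rpow_le (hcont : Continuous φ) (hφ : ∀ t, 0 ≤ φ t) {T : ℝ}
    (hφC : ∫ t in T..(T + 1), φ t ≤ C * Real.log (|T| + 2)) (hδ : 0 < δ) (hδ1 : δ ≤ 1) :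
    ∫ t in T..(T + 1), φ t * (1 + |t|) ^ (-(1 + δ)) ≤
      ∫ t in T..(T + 1), 64 * C / δ * (1 + |t|) ^ (-(1 + δ / 2)) := by
  have hT : T ≤ T + 1 := by linarith
  have hnear {t : ℝ} (ht : t ∈ Icc T (T + 1)) : |T - t| ≤ 1 := by
    rw [abs_le]
    constructor <;> linarith [ht.1, ht.2]
  have hC : 0 ≤ C := nonneg_of_mul_nonneg_left
    ((intervalIntegral.integral_nonneg hT fun t _ => hφ t).trans hφC) (log_abs_add_two_pos T)
  have hweight := continuous_one_add_abs_rpow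
  calc ∫ t in T..(T + 1), φ t * (1 + |t|) ^ (-(1 + δ))
      ≤ ∫ t in T..(T + 1), φ t * (4 * (1 + |T|) ^ (-(1 + δ))) := by
        refine intervalIntegral.integral_mono_on hT ((hcont.mul (hweight _)).intervalIntegrable _ _)
          ((hcont.mul continuous_const).intervalIntegrable _ _) fun t ht => ?_
        exact mul_le_mul_of_nonneg_left
          (one_add_abs_rpow_neg_le_four_mul (by linarith) (by linarith) (hnear ht)) (hφ t)
    _ ≤ C * Real.log (|T| + 2) * (4 * (1 + |T|) ^ (-(1 + δ))) := by
        rw [intervalIntegral.integral_mul_const]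
        gcongr
    _ ≤ 16 * C / δ * (1 + |T|) ^ (-(1 + δ / 2)) := by
        have := mul_le_mul_of_nonneg_left (log_abs_add_two_mul_rpow_le hδ hδ1 T)
          (mul_nonneg zero_le_four hC)
        linear_combination this
    _ = ∫ t in T..(T + 1), 16 * C / δ * (1 + |T|) ^ (-(1 + δ / 2)) := by simp
    _ ≤ ∫ t in T..(T + 1), 64 * C / δ * (1 + |t|) ^ (-(1 + δ / 2)) := by
        refine intervalIntegral.integral_mono_on hT (continuous_const.intervalIntegrable _ _)
          ((continuous_const.mul (hweight _)).intervalIntegrable _ _) fun t ht => ?_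
        have := mul_le_mul_of_nonneg_left (one_add_abs_rpow_neg_le_four_mul (r := 1 + δ / 2)
          (by linarith) (by linarith) ((abs_sub_comm t T).trans_le (hnear ht)))
          (by positivity : 0 ≤ 16 * C / δ)
        linear_combination this

theorem integral_mul_rpow_le_of_integral_le_log (hcont : Continuous φ) (hφ : ∀ t, 0 ≤ φ t)
    (hφC : ∀ T, ∫ t in T..(T + 1), φ t ≤ C * Real.log (|T| + 2)) (hδ : 0 < δ) (hδ1 : δ ≤ 1)
    (hint : Integrable fun t => φ t * (1 + |t|) ^ (-(1 + δ))) :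
    ∫ t, φ t * (1 + |t|) ^ (-(1 + δ)) ≤ 256 * C / δ ^ 2 := by
  have hweight : Integrable fun t : ℝ => 64 * C / δ * (1 + |t|) ^ (-(1 + δ / 2)) :=
    (integrable_one_add_abs_rpow_neg (by linarith)).const_mul _
  refine (hasSum_le (fun n => intervalIntegral_mul_rpow_le hcont hφ (hφC _) hδ hδ1)
    (hint.hasSum_intervalIntegral 0) (hweight.hasSum_intervalIntegral 0)).trans_eq ?_
  rw [integral_const_mul, integral_one_add_abs_rpow_neg (half_pos hδ)]
  ring

lemma le_mul_rpow_of_le_div {w B r u : ℝ} (hw : 0 ≤ w) (hr : 0 ≤ r) (hu : 0 < u)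
    (hwB : w ≤ B / u) (hwr : w ≤ B * r / u ^ 2) (hδ : 0 ≤ δ) (hδ1 : δ ≤ 1) :
    w ≤ B * r ^ δ * u ^ (-(1 + δ)) := by
  have hB : 0 ≤ B / u := hw.trans hwB
  have : 0 ≤ 1 - δ := by linarith
  calc w = w ^ (1 - δ) * w ^ δ := by rw [← Real.rpow_add' hw (by simp)]; simp
    _ ≤ (B / u) ^ (1 - δ) * (B * r / u ^ 2) ^ δ := by gcongr
    _ = (B / u) ^ (1 - δ) * (B / u) ^ δ * (r / u) ^ δ := by
        rw [show B * r / u ^ 2 = B / u * (r / u) by ring, Real.mul_rpow hB (by positivity),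
          mul_assoc]
    _ = B * r ^ δ * u ^ (-(1 + δ)) := by
        rw [← Real.rpow_add' hB (by simp), sub_add_cancel, Real.rpow_one, Real.div_rpow hr hu.le,
          Real.rpow_neg hu.le, Real.rpow_add hu, Real.rpow_one]
        field_simp

lemma sqrt_rpow_inv_log_le {x : ℝ} (hx : 1 < x) : √x ^ (Real.log x)⁻¹ ≤ 2 := by
  rw [Real.sqrt_eq_rpow, ← Real.rpow_mul (by linarith), mul_comm, Real.rpow_mul (by linarith),
    Real.rpow_inv_log (by linarith) hx.ne', ← Real.sqrt_eq_rpow, Real.sqrt_le_left zero_le_two]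
  linarith [Real.exp_one_lt_d9]

lemma add_sqrt_rpow_le {x r : ℝ} (hx : 1 ≤ x) (hr : 0 ≤ r) (hr1 : r ≤ 1) :
    (x + √x) ^ r ≤ 2 * x ^ r := by
  have hsqrt : √x ≤ x := (Real.sqrt_le_left (by linarith)).mpr (by nlinarith)
  calc (x + √x) ^ r ≤ (2 * x) ^ r := by
        gcongr
        linarith
    _ = 2 ^ r * x ^ r := Real.mul_rpow zero_le_two (by linarith)
    _ ≤ 2 * x ^ r := by
        gcongr
        simpa using Real.rpow_le_rpow_of_exponent_le one_le_two hr1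

theorem norm_trapezoidMellin_sqrt_le {x : ℝ} (hx : Real.exp 1 ≤ x) {s : ℂ} (hs : 1 / 4 ≤ s.re)
    (hs1 : s.re ≤ 1) :
    ‖trapezoidMellin x √x s‖ ≤ 1024 * x ^ s.re * (1 + |s.im|) ^ (-(1 + (Real.log x)⁻¹)) := by
  have hx1 : 1 < x := (Real.one_lt_exp_iff.mpr one_pos).trans_le hx
  have hx0 : 0 < x := by linarith
  have hsqrt : 0 < √x := Real.sqrt_pos.mpr hx0
  have hlog : 1 ≤ Real.log x := by rwa [Real.le_log_iff_exp_le hx0]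
  have him : 0 < 1 + |s.im| := by positivity
  have hnorm : 1 / 8 * (1 + |s.im|) ≤ ‖s‖ := by
    linarith [mul_one_add_abs_im_le_norm (by norm_num) hs]
  have : 0 < ‖s‖ := by linarith
  have hpow := add_sqrt_rpow_le hx1.le (by linarith) hs1
  have hfirst : ‖trapezoidMellin x √x s‖ ≤ 512 * x ^ s.re / (1 + |s.im|) :=
    calc ‖trapezoidMellin x √x s‖ ≤ (x + √x) ^ s.re / ‖s‖ :=
          norm_trapezoidMellin_le hx0 hsqrt (by linarith)
      _ ≤ 64 * x ^ s.re / (1 / 8 * (1 + |s.im|)) := by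
          gcongr
          linarith [Real.rpow_pos_of_pos hx0 s.re]
      _ = 512 * x ^ s.re / (1 + |s.im|) := by
          field_simp
          norm_num
  have hsecond : ‖trapezoidMellin x √x s‖ ≤ 512 * x ^ s.re * √x / (1 + |s.im|) ^ 2 :=
    calc ‖trapezoidMellin x √x s‖ ≤ 2 * (x + √x) ^ (s.re + 1) / (√x * ‖s‖ ^ 2) :=
          norm_trapezoidMellin_le_div_sq hx0 hsqrt (by linarith)
      _ ≤ 2 * (2 * x ^ s.re * (2 * x)) / (√x * (1 / 8 * (1 + |s.im|)) ^ 2) := by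
          rw [Real.rpow_add (by positivity), Real.rpow_one]
          gcongr
          simpa using add_sqrt_rpow_le hx1.le zero_le_one le_rfl
      _ = 512 * x ^ s.re * √x / (1 + |s.im|) ^ 2 := by
          have := Real.sq_sqrt hx0.le
          field_simp
          rw [this]
          ring
  calc ‖trapezoidMellin x √x s‖
      ≤ 512 * x ^ s.re * √x ^ (Real.log x)⁻¹ * (1 + |s.im|) ^ (-(1 + (Real.log x)⁻¹)) :=
        le_mul_rpow_of_le_div (norm_nonneg _) hsqrt.le him hfirst hsecond (by positivity)
          (inv_le_one_of_one_le₀ hlog)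
    _ ≤ 512 * x ^ s.re * 2 * (1 + |s.im|) ^ (-(1 + (Real.log x)⁻¹)) := by
        gcongr
        exact sqrt_rpow_inv_log_le hx1
    _ = _ := by ring

end DecayWeights

section CriticalLine

open Complex Filter Topology ComplexConjugate

lemma integral_mul_eq_two_re_mul_sub_conj {g w : ℝ → ℂ} (hgw : Integrable fun t => g t * w t)
    (hgw' : Integrable fun t => g t * conj (w t)) :
    ∫ t, g t * w t =
      (∫ t, ((2 * (g t).re : ℝ) : ℂ) * w t) - conj (∫ t, g t * conj (w t)) := by
  have hconj : Integrable fun t => conj (g t * conj (w t)) :=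
    conjCLE.integrable_comp_iff.mpr hgw'
  rw [← integral_conj, eq_sub_iff_add_eq, ← integral_add hgw hconj]
  congr with t
  rw [map_mul, conj_conj, ← add_mul, add_conj]

lemma norm_integral_mul_trapezoidMellin_sqrt_le {g z : ℝ → ℂ} {x ρ : ℝ} (hx : Real.exp 1 ≤ x)
    (hρ : ρ ∈ Icc (1 / 4) 1) (hre : ∀ t, (z t).re = ρ) (him : ∀ t, |(z t).im| = |t|)
    (hg : Integrable fun t => ‖g t‖ * (1 + |t|) ^ (-(1 + (Real.log x)⁻¹))) :
    ‖∫ t, g t * trapezoidMellin x √x (z t)‖ ≤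
      1024 * x ^ ρ * ∫ t, ‖g t‖ * (1 + |t|) ^ (-(1 + (Real.log x)⁻¹)) := by
  rw [← integral_const_mul]
  refine norm_integral_le_of_norm_le (hg.const_mul _) (Eventually.of_forall fun t => ?_)
  have hkernel := norm_trapezoidMellin_sqrt_le hx (s := z t) (by rw [hre]; exact hρ.1)
    (by rw [hre]; exact hρ.2)
  rw [hre, him] at hkernel
  rw [norm_mul, mul_left_comm]
  exact mul_le_mul_of_nonneg_left hkernel (norm_nonneg _)

namespace IsRiemannType

variable {f : ℂ → ℂ} {A x h : ℝ}

lemma exists_norm_logDeriv_mul_trapezoidMellin_le (hf : IsRiemannType f A) {a b : ℝ}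
    (ha : 1 / 2 < a) (hb : 0 < b) (hb1 : b ≤ 1) (hx : 1 ≤ x) (hh : 0 < h) :
    ∃ K : ℝ, ∀ s z : ℂ, s.re ∈ Icc a 2 → z.re ∈ Icc b 2 → |z.im| = |s.im| →
      ‖logDeriv f s * trapezoidMellin x h z‖ ≤ K * (1 + |s.im|) ^ (-(3 / 2 : ℝ)) := by
  obtain ⟨C, hC, hlogDeriv⟩ := hf.exists_norm_logDeriv_le
  refine ⟨C * (1 + 1 / (a - 1 / 2)) * 4 * (8 * (x + h) ^ (2 + 1 : ℝ) / (h * b ^ 2)),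
    fun s z hs hz him => ?_⟩
  have ha' : 0 < a - 1 / 2 := by linarith
  have : 0 < x + h := by linarith
  have hlog : Real.log (|s.im| + 2) ≤ 4 * (1 + |s.im|) ^ (1 / 2 : ℝ) :=
    (log_abs_add_two_le_rpow (η := 1 / 2) (by norm_num) (by norm_num) _).trans_eq (by norm_num)
  have hfirst : ‖logDeriv f s‖ ≤
      C * (1 + 1 / (a - 1 / 2)) * (4 * (1 + |s.im|) ^ (1 / 2 : ℝ)) := by
    refine (hlogDeriv s (by linarith [hs.1]) hs.2).trans ?_
    have : 1 / (s.re - 1 / 2) ≤ 1 / (a - 1 / 2) :=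
      one_div_le_one_div_of_le ha' (by linarith [hs.1])
    have := log_abs_add_two_pos s.im
    gcongr
  have hsecond := norm_trapezoidMellin_le_rpow hx hh hb hb1 hz
  rw [him] at hsecond
  calc ‖logDeriv f s * trapezoidMellin x h z‖
      = ‖logDeriv f s‖ * ‖trapezoidMellin x h z‖ := norm_mul _ _
    _ ≤ C * (1 + 1 / (a - 1 / 2)) * (4 * (1 + |s.im|) ^ (1 / 2 : ℝ)) *
          (8 * (x + h) ^ (2 + 1 : ℝ) / (h * b ^ 2) * (1 + |s.im|) ^ (-2 : ℝ)) := by gcongr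
    _ = C * (1 + 1 / (a - 1 / 2)) * 4 * (8 * (x + h) ^ (2 + 1 : ℝ) / (h * b ^ 2)) *
          ((1 + |s.im|) ^ (1 / 2 : ℝ) * (1 + |s.im|) ^ (-2 : ℝ)) := by ring
    _ = _ := by
        rw [← Real.rpow_add (by positivity)]
        norm_num

lemma integral_logDeriv_mul_trapezoidMellin_eq (hf : IsRiemannType f A) (hx : 1 ≤ x) (hh : 0 < h)
    {σ : ℝ} (hσ : 1 / 2 < σ) (hσ2 : σ ≤ 2) :
    ∫ t : ℝ, logDeriv f (σ + t * I) * trapezoidMellin x h (σ + t * I) =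
      ∫ t : ℝ, logDeriv f ((2 : ℝ) + t * I) * trapezoidMellin x h ((2 : ℝ) + t * I) := by
  obtain ⟨K, hK⟩ := hf.exists_norm_logDeriv_mul_trapezoidMellin_le (b := 1 / 2) hσ
    (by norm_num) (by norm_num) hx hh
  refine integral_vertical_eq (H := fun s => logDeriv f s * trapezoidMellin x h s) (K := K)
    (r := 3 / 2) hσ2 (by norm_num) (fun s hs => ?_)
    fun s hs => hK s s hs ⟨by linarith [hs.1], hs.2⟩ rfl
  have hs1 : 1 / 2 < s.re := hσ.trans_le hs.1
  exact ((hf.differentiableAt_logDeriv hs1).mul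
    (differentiableAt_trapezoidMellin (by linarith) hh (by linarith))).differentiableWithinAt

/-- On `re s = σ` the conjugate of the kernel is its reflection `s ↦ 2 * σ - s`, which is
holomorphic, so the contour can be moved away from the critical line. -/
lemma integral_logDeriv_mul_conj_trapezoidMellin_eq (hf : IsRiemannType f A) (hx : 1 ≤ x)
    (hh : 0 < h) {σ τ : ℝ} (hσ : 1 / 2 < σ) (hστ : σ ≤ τ) (hτ : τ ≤ 2) (hτσ : τ < 2 * σ) :
    ∫ t : ℝ, logDeriv f (σ + t * I) * conj (trapezoidMellin x h (σ + t * I)) =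
      ∫ t : ℝ, logDeriv f (τ + t * I) * trapezoidMellin x h (2 * σ - (τ + t * I)) := by
  have hb : 0 < min 1 (2 * σ - τ) := lt_min one_pos (by linarith)
  obtain ⟨K, hK⟩ := hf.exists_norm_logDeriv_mul_trapezoidMellin_le hσ hb (min_le_left _ _) hx hh
  have hre (s : ℂ) : (2 * σ - s).re = 2 * σ - s.re := by simp
  have hshift := integral_vertical_eq (a := σ) (b := τ) (K := K) (r := 3 / 2)
    (H := fun s => logDeriv f s * trapezoidMellin x h (2 * σ - s)) hστ (by norm_num)
    (fun s hs => ?_) (fun s hs => hK s _ ⟨hs.1, hs.2.trans hτ⟩ ?_ (by simp))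
  · rw [← hshift]
    congr with t
    rw [← trapezoidMellin_conj (by linarith) hh]
    congr 2
    simp
    ring
  · refine DifferentiableAt.differentiableWithinAt ?_
    exact (hf.differentiableAt_logDeriv (hσ.trans_le hs.1)).mul
      ((differentiableAt_trapezoidMellin (by linarith) hh (by rw [hre]; linarith [hs.2])).comp s
        (by fun_prop))
  · rw [hre]
    exact ⟨(min_le_right _ _).trans (by linarith [hs.2]), by linarith [hs.1]⟩

lemma exists_norm_integral_re_logDeriv_mul_le (hf : IsRiemannType f A) :
    ∃ C, 0 < C ∧ ∀ x, Real.exp 1 ≤ x → ∀ σ : ℝ, 1 / 2 < σ → σ ≤ 1 →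
      ‖∫ t : ℝ, ((2 * (logDeriv f (σ + t * I)).re : ℝ) : ℂ) *
          trapezoidMellin x √x (σ + t * I)‖ ≤ C * x ^ σ * Real.log x ^ 2 := by
  obtain ⟨B, -, hlogDeriv⟩ := hf.exists_norm_logDeriv_le
  obtain ⟨C, hC, hwindow⟩ := hf.exists_integral_abs_re_logDeriv_le
  refine ⟨1024 * (256 * (2 * C)), by positivity, fun x hx σ hσ hσ1 => ?_⟩
  have hlog : 1 ≤ Real.log x := by rwa [Real.le_log_iff_exp_le ((Real.exp_pos 1).trans_le hx)]
  have hδ : 0 < (Real.log x)⁻¹ := by positivity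
  have hδ1 := inv_le_one_of_one_le₀ hlog
  have := hf.continuous_logDeriv_vertical hσ
  set φ : ℝ → ℝ := fun t => ‖((2 * (logDeriv f (σ + t * I)).re : ℝ) : ℂ)‖
  have hφ : φ = fun t : ℝ => 2 * |(logDeriv f (σ + t * I)).re| := by
    ext t
    simp [φ]
  have hφcont : Continuous φ := by fun_prop
  have hφint : Integrable fun t => φ t * (1 + |t|) ^ (-(1 + (Real.log x)⁻¹)) := by
    refine integrable_mul_rpow_of_le_log (C := 2 * (B * (1 + 1 / (σ - 1 / 2)))) hφcont
      (fun t => norm_nonneg _) (fun t => ?_) hδ hδ1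
    rw [hφ, mul_assoc]
    have := hlogDeriv (σ + t * I) (by simpa using hσ) (by simpa using by linarith)
    exact mul_le_mul_of_nonneg_left ((abs_re_le_norm _).trans (by simpa using this)) zero_le_two
  have hφwindow (T : ℝ) : ∫ t in T..(T + 1), φ t ≤ 2 * C * Real.log (|T| + 2) := by
    rw [hφ, intervalIntegral.integral_const_mul, mul_assoc]
    exact mul_le_mul_of_nonneg_left (hwindow σ hσ hσ1 T) zero_le_two
  calc _ ≤ 1024 * x ^ σ * ∫ t, φ t * (1 + |t|) ^ (-(1 + (Real.log x)⁻¹)) :=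
        norm_integral_mul_trapezoidMellin_sqrt_le hx ⟨by linarith, hσ1⟩ (by simp) (by simp) hφint
    _ ≤ 1024 * x ^ σ * (256 * (2 * C) / (Real.log x)⁻¹ ^ 2) := by
        have : 0 < x := (Real.exp_pos 1).trans_le hx
        gcongr
        exact integral_mul_rpow_le_of_integral_le_log hφcont (fun t => norm_nonneg _) hφwindow hδ
          hδ1 hφint
    _ = _ := by
        rw [inv_pow, div_inv_eq_mul]
        ring

lemma exists_norm_integral_logDeriv_mul_reflection_le (hf : IsRiemannType f A) {τ : ℝ}
    (hτ : 1 / 2 < τ) (hτ2 : τ ≤ 2) :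
    ∃ C, 0 < C ∧ ∀ x, Real.exp 1 ≤ x → ∀ σ : ℝ, 2 * σ - τ ∈ Icc (1 / 4) 1 →
      ‖∫ t : ℝ, logDeriv f (τ + t * I) * trapezoidMellin x √x (2 * σ - (τ + t * I))‖ ≤
        C * x ^ (2 * σ - τ) * Real.log x ^ 2 := by
  obtain ⟨B, hB, hlogDeriv⟩ := hf.exists_norm_logDeriv_le
  have : 0 < 1 + 1 / (τ - 1 / 2) := by
    have : 0 < τ - 1 / 2 := by linarith
    positivity
  refine ⟨1024 * (16 * (B * (1 + 1 / (τ - 1 / 2)))), by positivity, fun x hx σ hσ => ?_⟩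
  have hlog : 1 ≤ Real.log x := by rwa [Real.le_log_iff_exp_le ((Real.exp_pos 1).trans_le hx)]
  have hδ : 0 < (Real.log x)⁻¹ := by positivity
  have hδ1 := inv_le_one_of_one_le₀ hlog
  have hcont := (hf.continuous_logDeriv_vertical hτ).norm
  have hbound (t : ℝ) : ‖logDeriv f (τ + t * I)‖ ≤
      B * (1 + 1 / (τ - 1 / 2)) * Real.log (|t| + 2) := by
    simpa using hlogDeriv (τ + t * I) (by simpa using hτ) (by simpa using hτ2)
  calc _ ≤ 1024 * x ^ (2 * σ - τ) *
          ∫ t : ℝ, ‖logDeriv f (τ + t * I)‖ * (1 + |t|) ^ (-(1 + (Real.log x)⁻¹)) :=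
        norm_integral_mul_trapezoidMellin_sqrt_le hx hσ (by simp) (by simp)
          (integrable_mul_rpow_of_le_log hcont (fun t => norm_nonneg _) hbound hδ hδ1)
    _ ≤ 1024 * x ^ (2 * σ - τ) *
          (16 * (B * (1 + 1 / (τ - 1 / 2))) / (Real.log x)⁻¹ ^ 2) := by
        have : 0 < x := (Real.exp_pos 1).trans_le hx
        gcongr
        exact integral_mul_rpow_le_of_le_log hcont (fun t => norm_nonneg _) hbound hδ hδ1
    _ = _ := by
        rw [inv_pow, div_inv_eq_mul]
        ring

lemma integrable_logDeriv_mul_trapezoidMellin (hf : IsRiemannType f A) (hx : 1 ≤ x) (hh : 0 < h)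
    {σ : ℝ} (hσ : 1 / 2 < σ) (hσ2 : σ ≤ 2) :
    Integrable fun t : ℝ => logDeriv f (σ + t * I) * trapezoidMellin x h (σ + t * I) := by
  obtain ⟨K, hK⟩ := hf.exists_norm_logDeriv_mul_trapezoidMellin_le hσ (b := 1 / 2)
    (by norm_num) (by norm_num) hx hh
  refine integrable_of_norm_le_one_add_abs_rpow (K := K) (r := 3 / 2) (by norm_num)
    ((hf.continuous_logDeriv_vertical hσ).mul
      (continuous_trapezoidMellin_vertical (by linarith) hh (by linarith))) fun t => ?_
  simpa using hK (σ + t * I) (σ + t * I) (by simpa using hσ2)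
    (by simpa using ⟨by linarith, hσ2⟩) rfl

lemma integral_logDeriv_mul_trapezoidMellin_eq_sub (hf : IsRiemannType f A) (hx : 1 ≤ x)
    (hh : 0 < h) {σ τ : ℝ} (hσ : 1 / 2 < σ) (hστ : σ ≤ τ) (hτ : τ ≤ 2) (hτσ : τ < 2 * σ) :
    ∫ t : ℝ, logDeriv f ((2 : ℝ) + t * I) * trapezoidMellin x h ((2 : ℝ) + t * I) =
      (∫ t : ℝ, ((2 * (logDeriv f (σ + t * I)).re : ℝ) : ℂ) * trapezoidMellin x h (σ + t * I)) -
      conj (∫ t : ℝ, logDeriv f (τ + t * I) * trapezoidMellin x h (2 * σ - (τ + t * I))) := by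
  have hint := hf.integrable_logDeriv_mul_trapezoidMellin hx hh hσ (hστ.trans hτ)
  have hcont : Continuous fun t : ℝ =>
      logDeriv f (σ + t * I) * conj (trapezoidMellin x h (σ + t * I)) :=
    (hf.continuous_logDeriv_vertical hσ).mul
      (continuous_conj.comp (continuous_trapezoidMellin_vertical (by linarith) hh (by linarith)))
  rw [← hf.integral_logDeriv_mul_trapezoidMellin_eq hx hh hσ (hστ.trans hτ),
    ← hf.integral_logDeriv_mul_conj_trapezoidMellin_eq hx hh hσ hστ hτ hτσ]
  refine integral_mul_eq_two_re_mul_sub_conj hint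
    (hint.mono hcont.aestronglyMeasurable (Eventually.of_forall fun t => ?_))
  rw [norm_mul, RCLike.norm_conj, norm_mul]

theorem exists_norm_integral_logDeriv_mul_le (hf : IsRiemannType f A) :
    ∃ C, 0 < C ∧ ∀ x, Real.exp 8 ≤ x →
      ‖∫ t : ℝ, logDeriv f ((2 : ℝ) + t * I) * trapezoidMellin x √x ((2 : ℝ) + t * I)‖ ≤
        C * √x * Real.log x ^ 2 := by
  obtain ⟨C₁, hC₁, hre⟩ := hf.exists_norm_integral_re_logDeriv_mul_le
  obtain ⟨C₂, hC₂, hreflection⟩ := hf.exists_norm_integral_logDeriv_mul_reflection_le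
    (τ := 3 / 4) (by norm_num) (by norm_num)
  refine ⟨C₁ * 3 + C₂ * 9, by positivity, fun x hx => ?_⟩
  have hexp : Real.exp 1 ≤ x := (Real.exp_le_exp.mpr (by norm_num)).trans hx
  have hx1 : 1 < x := (Real.one_lt_exp_iff.mpr one_pos).trans_le hexp
  have hx0 : 0 < x := by linarith
  have hlog : 8 ≤ Real.log x := by rwa [Real.le_log_iff_exp_le hx0]
  have hδ : 0 < (Real.log x)⁻¹ := by positivity
  have hδ8 : (Real.log x)⁻¹ ≤ 1 / 8 := by
    rw [inv_le_comm₀ (by linarith) (by norm_num)]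
    linarith
  have he : x ^ (Real.log x)⁻¹ ≤ 3 := by
    rw [Real.rpow_inv_log hx0 hx1.ne']
    linarith [Real.exp_one_lt_d9]
  set σ := 1 / 2 + (Real.log x)⁻¹ with hσ
  have hpow₁ : x ^ σ ≤ 3 * √x := by
    rw [hσ, Real.rpow_add hx0, ← Real.sqrt_eq_rpow, mul_comm]
    gcongr
  have hpow₂ : x ^ (2 * σ - 3 / 4) ≤ 9 * √x := by
    calc x ^ (2 * σ - 3 / 4) = (x ^ (Real.log x)⁻¹) ^ 2 * x ^ (1 / 4 : ℝ) := by
          rw [← Real.rpow_mul_natCast hx0.le, ← Real.rpow_add hx0]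
          congr 1
          push_cast
          linarith
      _ ≤ 3 ^ 2 * x ^ (1 / 2 : ℝ) := by
          gcongr
          · exact hx1.le
          · norm_num
      _ = 9 * √x := by rw [← Real.sqrt_eq_rpow]; norm_num
  rw [hf.integral_logDeriv_mul_trapezoidMellin_eq_sub hx1.le (Real.sqrt_pos.mpr hx0)
    (σ := σ) (τ := 3 / 4) (by linarith) (by linarith) (by norm_num) (by linarith)]
  calc _ ≤ C₁ * x ^ σ * Real.log x ^ 2 + C₂ * x ^ (2 * σ - 3 / 4) * Real.log x ^ 2 := by
        refine (norm_sub_le _ _).trans (add_le_add (hre x hexp σ (by linarith) (by linarith)) ?_)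
        rw [RCLike.norm_conj]
        exact hreflection x hexp σ ⟨by linarith, by linarith⟩
    _ ≤ C₁ * (3 * √x) * Real.log x ^ 2 + C₂ * (9 * √x) * Real.log x ^ 2 := by gcongr
    _ = _ := by ring

end IsRiemannType

end CriticalLine

section Perron

open Complex Filter Topology ArithmeticFunction

variable {a : ℕ → ℂ} {c : ℂ} {x h : ℝ}

lemma norm_term_vertical_le (a : ℕ → ℂ) (σ t : ℝ) (n : ℕ) :
    ‖LSeries.term a (σ + t * I) n‖ ≤ ‖LSeries.term a σ n‖ :=
  LSeries.norm_term_le_of_re_le_re a (by simp) n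

lemma integrable_term_mul_trapezoidMellin (a : ℕ → ℂ) (hx : 1 ≤ x) (hh : 0 < h) {σ : ℝ}
    (hσ : 0 < σ) (n : ℕ) :
    Integrable fun t : ℝ => LSeries.term a (σ + t * I) n * trapezoidMellin x h (σ + t * I) := by
  refine (integrable_trapezoidMellin_vertical hx hh hσ).bdd_mul (c := ‖LSeries.term a σ n‖)
    (Continuous.aestronglyMeasurable ?_)
    (Eventually.of_forall fun t => norm_term_vertical_le a σ t n)
  rcases eq_or_ne n 0 with rfl | hn
  · simpa using continuous_const
  · simp only [LSeries.term_of_ne_zero hn]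
    exact continuous_const.div (Continuous.const_cpow (by fun_prop) (by simp [hn]))
      fun t => by simp [cpow_eq_zero_iff, hn]

lemma integral_term_mul_trapezoidMellin (a : ℕ → ℂ) (hx : 1 ≤ x) (hh : 0 < h) {σ : ℝ}
    (hσ : 0 < σ) {n : ℕ} (hn : n ≠ 0) :
    ∫ t : ℝ, LSeries.term a (σ + t * I) n * trapezoidMellin x h (σ + t * I) =
      2 * Real.pi * (a n * trapezoid x h n) := by
  have hkernel := integral_trapezoidMellin_mul_cpow_neg hx hh hσ (v := n) (by positivity)
  calc ∫ t : ℝ, LSeries.term a (σ + t * I) n * trapezoidMellin x h (σ + t * I)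
      = ∫ t : ℝ, a n * (trapezoidMellin x h (σ + t * I) *
          ((n : ℝ) : ℂ) ^ (-(σ + t * I : ℂ))) := by
        congr with t
        rw [LSeries.term_of_ne_zero hn, cpow_neg, ofReal_natCast]
        ring
    _ = 2 * Real.pi * (a n * trapezoid x h n) := by
        rw [integral_const_mul, hkernel]
        ring

theorem integral_LSeries_mul_trapezoidMellin (hx : 1 ≤ x) (hh : 0 < h) {σ : ℝ} (hσ : 0 < σ)
    (ha : LSeriesSummable a σ) :
    ∫ t : ℝ, LSeries a (σ + t * I) * trapezoidMellin x h (σ + t * I) =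
      2 * Real.pi * ∑ n ∈ Finset.Ioc 0 ⌊x + h⌋₊, a n * trapezoid x h n := by
  have hkernel := (integrable_trapezoidMellin_vertical hx hh hσ).norm
  have hint := integrable_term_mul_trapezoidMellin a hx hh hσ
  have hsummable : Summable fun n =>
      ∫ t : ℝ, ‖LSeries.term a (σ + t * I) n * trapezoidMellin x h (σ + t * I)‖ := by
    refine Summable.of_nonneg_of_le (fun n => integral_nonneg fun t => norm_nonneg _) (fun n => ?_)
      (ha.norm.mul_right (∫ t : ℝ, ‖trapezoidMellin x h (σ + t * I)‖))
    rw [← integral_const_mul]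
    refine integral_mono (hint n).norm (hkernel.const_mul _) fun t => ?_
    rw [norm_mul]
    exact mul_le_mul_of_nonneg_right (norm_term_vertical_le a σ t n) (norm_nonneg _)
  calc ∫ t : ℝ, LSeries a (σ + t * I) * trapezoidMellin x h (σ + t * I)
      = ∑' n, ∫ t : ℝ, LSeries.term a (σ + t * I) n * trapezoidMellin x h (σ + t * I) := by
        rw [integral_tsum_of_summable_integral_norm hint hsummable]
        simp only [tsum_mul_right, LSeries]
    _ = ∑ n ∈ Finset.Ioc 0 ⌊x + h⌋₊,
          ∫ t : ℝ, LSeries.term a (σ + t * I) n * trapezoidMellin x h (σ + t * I) := by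
        refine tsum_eq_sum fun n hn => ?_
        rcases eq_or_ne n 0 with rfl | hn0
        · simp
        · have hfloor : ⌊x + h⌋₊ < n := by
            by_contra! hle
            exact hn (Finset.mem_Ioc.mpr ⟨Nat.pos_of_ne_zero hn0, hle⟩)
          rw [integral_term_mul_trapezoidMellin a hx hh hσ hn0,
            trapezoid_of_ge hh (Nat.lt_of_floor_lt hfloor).le, ofReal_zero, mul_zero, mul_zero]
    _ = _ := by
        rw [Finset.mul_sum]
        refine Finset.sum_congr rfl fun n hn => ?_
        exact integral_term_mul_trapezoidMellin a hx hh hσ (Finset.mem_Ioc.mp hn).1.ne'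

lemma LSeriesSummable_of_norm_le_vonMangoldt (ha : ∀ n, ‖a n‖ ≤ Λ n) {s : ℂ} (hs : 1 < s.re) :
    LSeriesSummable a s :=
  Summable.of_norm_bounded (LSeriesSummable_vonMangoldt hs).norm fun n =>
    LSeries.norm_term_le s ((ha n).trans (by simpa using le_abs_self (Λ n)))

lemma trapezoid_le_one (hh : 0 < h) (v : ℝ) : trapezoid x h v ≤ 1 := by
  rw [trapezoid, div_le_one hh, sub_le_iff_le_add]
  exact max_le (by linarith [le_max_left (x - v) 0]) (by linarith [le_max_right (x - v) 0])

lemma norm_sum_Ioc_mul_trapezoid_le (ha : ∀ n, ‖a n‖ ≤ Λ n) (hx : 2 ≤ x) (hh : 0 < h)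
    (hhx : h ≤ x) :
    ‖∑ n ∈ Finset.Ioc ⌊x⌋₊ ⌊x + h⌋₊, a n * trapezoid x h n‖ ≤ (h + 1) * (2 * Real.log x) := by
  have hterm {n : ℕ} (hn : n ∈ Finset.Ioc ⌊x⌋₊ ⌊x + h⌋₊) :
      ‖a n * trapezoid x h n‖ ≤ 2 * Real.log x := by
    have hn1 : n ≤ x + h := (Nat.le_floor_iff (by linarith)).mp (Finset.mem_Ioc.mp hn).2
    have hn0 : 0 < n := (Nat.zero_le _).trans_lt (Finset.mem_Ioc.mp hn).1
    calc ‖a n * trapezoid x h n‖ ≤ Λ n * 1 := by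
          rw [norm_mul, norm_real, Real.norm_of_nonneg (trapezoid_nonneg hh _)]
          exact mul_le_mul (ha n) (trapezoid_le_one hh _) (trapezoid_nonneg hh _)
            vonMangoldt_nonneg
      _ ≤ Real.log n := by rw [mul_one]; exact vonMangoldt_le_log
      _ ≤ Real.log (x ^ 2) := Real.log_le_log (by positivity) (by nlinarith)
      _ = 2 * Real.log x := by rw [Real.log_pow]; norm_num
  have hfloor : ⌊x⌋₊ ≤ ⌊x + h⌋₊ := Nat.floor_mono (by linarith)
  calc ‖∑ n ∈ Finset.Ioc ⌊x⌋₊ ⌊x + h⌋₊, a n * trapezoid x h n‖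
      ≤ (⌊x + h⌋₊ - ⌊x⌋₊ : ℝ) * (2 * Real.log x) := by
        refine (norm_sum_le_of_le _ fun n => hterm).trans_eq ?_
        rw [Finset.sum_const, nsmul_eq_mul, Nat.card_Ioc, Nat.cast_sub hfloor]
    _ ≤ (h + 1) * (2 * Real.log x) := by
        have := Real.log_nonneg (by linarith : 1 ≤ x)
        gcongr
        linarith [Nat.floor_le (by linarith : 0 ≤ x + h), Nat.lt_floor_add_one x]

lemma sum_Ioc_sub_mul_eq (a : ℕ → ℂ) (c : ℂ) (hx : 0 ≤ x) (hh : 0 < h) :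
    ∑ n ∈ Finset.Ioc 0 ⌊x⌋₊, a n - c * x =
      -(c * (x - 1 + h / 2 : ℝ) - ∑ n ∈ Finset.Ioc 0 ⌊x + h⌋₊, a n * trapezoid x h n) +
        c * (h / 2 - 1 : ℝ) - ∑ n ∈ Finset.Ioc ⌊x⌋₊ ⌊x + h⌋₊, a n * trapezoid x h n := by
  have hone : ∑ n ∈ Finset.Ioc 0 ⌊x⌋₊, a n * trapezoid x h n = ∑ n ∈ Finset.Ioc 0 ⌊x⌋₊, a n := by
    refine Finset.sum_congr rfl fun n hn => ?_
    rw [trapezoid_of_le hh ((Nat.le_floor_iff hx).mp (Finset.mem_Ioc.mp hn).2),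
      ofReal_one, mul_one]
  rw [← Finset.sum_Ioc_consecutive _ (Nat.zero_le _) (Nat.floor_mono (by linarith) :
    ⌊x⌋₊ ≤ ⌊x + h⌋₊), hone]
  push_cast
  ring

lemma exists_norm_sum_sub_mul_le_of_le (a : ℕ → ℂ) (c : ℂ) (X : ℝ) :
    ∃ B, 0 ≤ B ∧ ∀ x, 0 ≤ x → x ≤ X → ‖∑ n ∈ Finset.Ioc 0 ⌊x⌋₊, a n - c * x‖ ≤ B := by
  refine ⟨(∑ n ∈ Finset.Ioc 0 ⌊X⌋₊, ‖a n‖) + ‖c‖ * |X|, by positivity, fun x hx hxX => ?_⟩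
  refine (norm_sub_le _ _).trans (add_le_add ((norm_sum_le _ _).trans ?_) ?_)
  · exact Finset.sum_le_sum_of_subset_of_nonneg
      (Finset.Ioc_subset_Ioc_right (Nat.floor_mono hxX)) fun _ _ _ => norm_nonneg _
  · rw [norm_mul, norm_real, Real.norm_of_nonneg hx]
    gcongr
    exact hxX.trans (le_abs_self X)

namespace IsRiemannType

variable {f : ℂ → ℂ} {A : ℝ}

theorem integral_logDeriv_mul_trapezoidMellin_eq_sum (hf : IsRiemannType f A)
    (ha : ∀ n, ‖a n‖ ≤ Λ n)
    (hfa : ∀ s : ℂ, 1 < s.re → -logDeriv f s = LSeries a s - c / (s - 1))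
    (hx : 1 ≤ x) (hh : 0 < h) :
    ∫ t : ℝ, logDeriv f ((2 : ℝ) + t * I) * trapezoidMellin x h ((2 : ℝ) + t * I) =
      2 * Real.pi * (c * (x - 1 + h / 2 : ℝ) -
        ∑ n ∈ Finset.Ioc 0 ⌊x + h⌋₊, a n * trapezoid x h n) := by
  have hperron := integral_LSeries_mul_trapezoidMellin hx hh zero_lt_two
    (LSeriesSummable_of_norm_le_vonMangoldt ha (s := (2 : ℝ)) (by norm_num))
  have hL (t : ℝ) : LSeries a ((2 : ℝ) + t * I) * trapezoidMellin x h ((2 : ℝ) + t * I) =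
      -(logDeriv f ((2 : ℝ) + t * I) * trapezoidMellin x h ((2 : ℝ) + t * I)) +
        c * (trapezoidMellin x h ((2 : ℝ) + t * I) / ((2 : ℝ) + t * I - 1)) := by
    rw [eq_add_of_sub_eq (hfa ((2 : ℝ) + t * I) (by simp)).symm]
    ring
  simp only [hL] at hperron
  rw [integral_add (hf.integrable_logDeriv_mul_trapezoidMellin hx hh (by norm_num) le_rfl).fun_neg
      ((integrable_trapezoidMellin_div_vertical hx hh one_lt_two).const_mul c),
    integral_neg, integral_const_mul,
    integral_trapezoidMellin_div_sub_one hx hh one_lt_two] at hperron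
  linear_combination -hperron

lemma exists_norm_smoothed_sum_sub_mul_le (hf : IsRiemannType f A) (ha : ∀ n, ‖a n‖ ≤ Λ n)
    (hfa : ∀ s : ℂ, 1 < s.re → -logDeriv f s = LSeries a s - c / (s - 1)) :
    ∃ C, 0 < C ∧ ∀ x, Real.exp 8 ≤ x →
      ‖c * (x - 1 + √x / 2 : ℝ) - ∑ n ∈ Finset.Ioc 0 ⌊x + √x⌋₊, a n * trapezoid x √x n‖ ≤
        C * √x * Real.log x ^ 2 := by
  obtain ⟨C, hC, hintegral⟩ := hf.exists_norm_integral_logDeriv_mul_le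
  refine ⟨C, hC, fun x hx => ?_⟩
  have hx1 : 1 ≤ x := by linarith [Real.add_one_le_exp 8]
  have hpi : 1 ≤ ‖(2 * Real.pi : ℂ)‖ := by
    rw [norm_mul, norm_real, Real.norm_of_nonneg Real.pi_pos.le, norm_ofNat]
    linarith [Real.pi_gt_three]
  have hbound := hintegral x hx
  rw [hf.integral_logDeriv_mul_trapezoidMellin_eq_sum ha hfa hx1 (Real.sqrt_pos.mpr (by linarith)),
    norm_mul] at hbound
  exact (le_mul_of_one_le_left (norm_nonneg _) hpi).trans hbound

lemma exists_norm_sum_sub_mul_le_of_ge (hf : IsRiemannType f A) (ha : ∀ n, ‖a n‖ ≤ Λ n)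
    (hfa : ∀ s : ℂ, 1 < s.re → -logDeriv f s = LSeries a s - c / (s - 1)) :
    ∃ C, 0 < C ∧ ∀ x, Real.exp 8 ≤ x →
      ‖∑ n ∈ Finset.Ioc 0 ⌊x⌋₊, a n - c * x‖ ≤ C * √x * Real.log x ^ 2 := by
  obtain ⟨C, hC, hsmooth⟩ := hf.exists_norm_smoothed_sum_sub_mul_le ha hfa
  refine ⟨C + 4 + ‖c‖, by positivity, fun x hx => ?_⟩
  have hx2 : 2 ≤ x := by linarith [Real.add_one_le_exp 8]
  have hx0 : 0 < x := by linarith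
  have hlog : 1 ≤ Real.log x := by
    rw [Real.le_log_iff_exp_le hx0]
    exact (Real.exp_le_exp.mpr (by norm_num)).trans hx
  have hsqrt1 : 1 ≤ √x := Real.one_le_sqrt.mpr (by linarith)
  have hsqrt0 : 0 < √x := by linarith
  have htail := norm_sum_Ioc_mul_trapezoid_le ha hx2 hsqrt0
    ((Real.sqrt_le_left hx0.le).mpr (by nlinarith))
  have hmain : ‖c * (√x / 2 - 1 : ℝ)‖ ≤ ‖c‖ * √x := by
    rw [norm_mul, norm_real, Real.norm_eq_abs]
    gcongr
    rw [abs_le]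
    constructor <;> linarith
  calc ‖∑ n ∈ Finset.Ioc 0 ⌊x⌋₊, a n - c * x‖
      ≤ C * √x * Real.log x ^ 2 + ‖c‖ * √x + (√x + 1) * (2 * Real.log x) := by
        rw [sum_Ioc_sub_mul_eq a c hx0.le hsqrt0]
        refine (norm_sub_le _ _).trans (add_le_add ((norm_add_le _ _).trans ?_) htail)
        rw [norm_neg]
        exact add_le_add (hsmooth x hx) hmain
    _ ≤ C * √x * Real.log x ^ 2 + ‖c‖ * √x * Real.log x ^ 2 +
          (2 * √x) * (2 * Real.log x ^ 2) := by
        have : ‖c‖ * √x ≤ ‖c‖ * √x * Real.log x ^ 2 :=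
          le_mul_of_one_le_right (by positivity) (one_le_pow₀ hlog)
        have : (√x + 1) * (2 * Real.log x) ≤ 2 * √x * (2 * Real.log x ^ 2) := by
          refine mul_le_mul (by linarith) ?_ (by positivity) (by positivity)
          linarith [le_self_pow₀ hlog two_ne_zero]
        linarith
    _ = _ := by ring

theorem exists_norm_sum_sub_mul_le (hf : IsRiemannType f A) (ha : ∀ n, ‖a n‖ ≤ Λ n)
    (hfa : ∀ s : ℂ, 1 < s.re → -logDeriv f s = LSeries a s - c / (s - 1)) :
    ∃ C, 0 < C ∧ ∀ x : ℝ, 2 ≤ x →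
      ‖∑ n ∈ Finset.Ioc 0 ⌊x⌋₊, a n - c * x‖ ≤ C * √x * Real.log x ^ 2 := by
  obtain ⟨C, hC, hlarge⟩ := hf.exists_norm_sum_sub_mul_le_of_ge ha hfa
  obtain ⟨B, hB, hsmall⟩ := exists_norm_sum_sub_mul_le_of_le a c (Real.exp 8)
  have : 0 < Real.log 2 := Real.log_pos one_lt_two
  refine ⟨C + B / Real.log 2 ^ 2, by positivity, fun x hx => ?_⟩
  have hlog : Real.log 2 ≤ Real.log x := Real.log_le_log two_pos hx
  have hsqrt : 1 ≤ √x := Real.one_le_sqrt.mpr (by linarith)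
  rcases le_total (Real.exp 8) x with hge | hle
  · refine (hlarge x hge).trans ?_
    gcongr
    exact le_add_of_nonneg_right (by positivity)
  · calc ‖∑ n ∈ Finset.Ioc 0 ⌊x⌋₊, a n - c * x‖ ≤ B := hsmall x (by linarith) hle
      _ = B / Real.log 2 ^ 2 * 1 * Real.log 2 ^ 2 := by field_simp
      _ ≤ (C + B / Real.log 2 ^ 2) * √x * Real.log x ^ 2 := by
          gcongr
          exact le_add_of_nonneg_left hC.le

end IsRiemannType

end Perron

section PartialSums

open Complex Filter Topology

variable {a : ℕ → ℂ} {m : ℂ} {B : ℝ}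

lemma exists_norm_sum_Icc_le_of_periodic {E : Type*} [SeminormedAddCommGroup E] {N : ℕ}
    {b : ℕ → E} (hN : 0 < N) (hb : Function.Periodic b N) (hsum : ∑ k ∈ Finset.range N, b k = 0) :
    ∃ B : ℝ, ∀ n, ‖∑ k ∈ Finset.Icc 1 n, b k‖ ≤ B := by
  have hperiodic : Function.Periodic (fun n => ∑ k ∈ Finset.range n, b k) N := fun n => by
    simp only
    rw [add_comm, Finset.sum_range_add, hsum, zero_add]
    exact Finset.sum_congr rfl fun k _ => by rw [add_comm, hb k]
  have hrange (n : ℕ) : ‖∑ k ∈ Finset.range n, b k‖ ≤ ∑ k ∈ Finset.range N, ‖b k‖ := by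
    rw [← hperiodic.map_mod_nat n]
    exact (norm_sum_le _ _).trans <| Finset.sum_le_sum_of_subset_of_nonneg
      (Finset.range_mono (Nat.mod_lt n hN).le) fun _ _ _ => norm_nonneg _
  refine ⟨∑ k ∈ Finset.range N, ‖b k‖ + ‖b 0‖, fun n => ?_⟩
  have hIcc : ∑ k ∈ Finset.Icc 1 n, b k = ∑ k ∈ Finset.range (n + 1), b k - b 0 := by
    rw [Finset.range_eq_Ico, Finset.sum_eq_sum_Ico_succ_bot n.succ_pos, add_sub_cancel_left]
    rfl
  rw [hIcc]
  exact (norm_sub_le _ _).trans (add_le_add_left (hrange _) _)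

/-- The error `∑_{1 ≤ k ≤ t} a k - m t` in approximating the partial sums of `a` by a linear
function of slope `m`. -/
noncomputable def partialSumError (a : ℕ → ℂ) (m : ℂ) (t : ℝ) : ℂ :=
  ∑ k ∈ Finset.Icc 1 ⌊t⌋₊, a k - m * t

/-- The integral of `partialSumError` against `t ^ (-(s + 1))` that partial summation attaches to
the Dirichlet series of `a`. -/
noncomputable def partialSumErrorIntegral (a : ℕ → ℂ) (m s : ℂ) : ℂ :=
  ∫ t in Ioi (1 : ℝ), partialSumError a m t * (t : ℂ) ^ (-(s + 1))

lemma measurable_partialSumError (a : ℕ → ℂ) (m : ℂ) : Measurable (partialSumError a m) := by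
  have hsum : Measurable fun n : ℕ => ∑ k ∈ Finset.Icc 1 n, a k := measurable_from_top
  exact (hsum.comp Nat.measurable_floor).sub (by fun_prop)

lemma norm_partialSumError_le (hB : ∀ n : ℕ, ‖∑ k ∈ Finset.Icc 1 n, a k - m * n‖ ≤ B) {t : ℝ}
    (ht : 0 ≤ t) : ‖partialSumError a m t‖ ≤ B + ‖m‖ := by
  have hsplit : partialSumError a m t = (∑ k ∈ Finset.Icc 1 ⌊t⌋₊, a k - m * (⌊t⌋₊ : ℂ)) +
      m * (⌊t⌋₊ - t : ℝ) := by
    rw [partialSumError]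
    push_cast
    ring
  rw [hsplit]
  refine (norm_add_le _ _).trans (add_le_add (hB _) ?_)
  rw [norm_mul, norm_real, Real.norm_eq_abs]
  refine mul_le_of_le_one_right (norm_nonneg _) (abs_le.mpr ⟨?_, ?_⟩)
  · linarith [Nat.lt_floor_add_one t]
  · linarith [Nat.floor_le ht]

lemma norm_partialSumError_mul_cpow_le
    (hB : ∀ n : ℕ, ‖∑ k ∈ Finset.Icc 1 n, a k - m * n‖ ≤ B) (s : ℂ) {t : ℝ} (ht : 0 < t) :
    ‖partialSumError a m t * (t : ℂ) ^ (-(s + 1))‖ ≤ (B + ‖m‖) * t ^ (-s.re - 1) := by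
  rw [norm_mul, norm_cpow_eq_rpow_re_of_pos ht, neg_re, add_re, one_re, neg_add']
  gcongr
  exact norm_partialSumError_le hB ht.le

lemma integrableOn_partialSumError_mul_cpow
    (hB : ∀ n : ℕ, ‖∑ k ∈ Finset.Icc 1 n, a k - m * n‖ ≤ B) {s : ℂ} (hs : 0 < s.re) :
    IntegrableOn (fun t : ℝ => partialSumError a m t * (t : ℂ) ^ (-(s + 1))) (Ioi 1) := by
  refine Integrable.mono'
    ((integrableOn_Ioi_rpow_of_lt (by linarith : -s.re - 1 < -1) one_pos).const_mul (B + ‖m‖)) ?_ ?_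
  · exact ((measurable_partialSumError a m).mul (by fun_prop)).aestronglyMeasurable
  · exact ae_restrict_of_forall_mem measurableSet_Ioi fun t ht =>
      norm_partialSumError_mul_cpow_le hB s (one_pos.trans ht)

theorem norm_partialSumErrorIntegral_le
    (hB : ∀ n : ℕ, ‖∑ k ∈ Finset.Icc 1 n, a k - m * n‖ ≤ B) {s : ℂ} (hs : 0 < s.re) :
    ‖partialSumErrorIntegral a m s‖ ≤ (B + ‖m‖) / s.re := by
  have hint : ∫ t in Ioi (1 : ℝ), (B + ‖m‖) * t ^ (-s.re - 1) = (B + ‖m‖) / s.re := by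
    rw [integral_const_mul, integral_Ioi_rpow_of_lt (by linarith) one_pos, Real.one_rpow,
      sub_add_cancel, neg_div_neg_eq, mul_one_div]
  rw [← hint]
  exact norm_integral_le_of_norm_le
    ((integrableOn_Ioi_rpow_of_lt (by linarith) one_pos).const_mul _)
    (ae_restrict_of_forall_mem measurableSet_Ioi fun t ht =>
      norm_partialSumError_mul_cpow_le hB s (one_pos.trans ht))

lemma partialSumErrorIntegral_eq_mellin (a : ℕ → ℂ) (m s : ℂ) :
    partialSumErrorIntegral a m s = mellin ((Ioi 1).indicator (partialSumError a m)) (-s) := by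
  have hindicator (t : ℝ) : (t : ℂ) ^ (-s - 1) • (Ioi 1).indicator (partialSumError a m) t =
      (Ioi 1).indicator (fun t : ℝ => partialSumError a m t * (t : ℂ) ^ (-(s + 1))) t := by
    rw [neg_add', smul_eq_mul, mul_comm]
    exact (indicator_mul_left _ _ fun t : ℝ => (t : ℂ) ^ (-s - 1)).symm
  simp only [mellin, hindicator]
  rw [setIntegral_indicator measurableSet_Ioi,
    inter_eq_self_of_subset_right (Ioi_subset_Ioi zero_le_one), partialSumErrorIntegral]

theorem differentiableAt_partialSumErrorIntegral
    (hB : ∀ n : ℕ, ‖∑ k ∈ Finset.Icc 1 n, a k - m * n‖ ≤ B) {s : ℂ} (hs : 0 < s.re) :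
    DifferentiableAt ℂ (partialSumErrorIntegral a m) s := by
  set g : ℝ → ℂ := (Ioi 1).indicator (partialSumError a m)
  have hgB (t : ℝ) : ‖g t‖ ≤ B + ‖m‖ := by
    by_cases ht : t ∈ Ioi (1 : ℝ)
    · rw [show g t = _ from indicator_of_mem ht _]
      exact norm_partialSumError_le hB (zero_le_one.trans ht.le)
    · rw [show g t = _ from indicator_of_notMem ht _, norm_zero]
      exact (norm_nonneg _).trans (norm_partialSumError_le hB le_rfl)
  have hlocal : LocallyIntegrable g := fun t =>
    ⟨Metric.ball t 1, Metric.ball_mem_nhds t one_pos, Measure.integrableOn_of_bounded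
      measure_ball_lt_top.ne
      ((measurable_partialSumError a m).indicator measurableSet_Ioi).aestronglyMeasurable
      (Eventually.of_forall hgB)⟩
  have hmellin : DifferentiableAt ℂ (mellin g) (-s) := by
    refine mellin_differentiableAt_of_isBigO_rpow (a := 0) (b := -s.re - 1)
      (hlocal.locallyIntegrableOn _) ?_ (by simpa using hs) ?_ (by simp)
    · exact .of_bound (B + ‖m‖) (Eventually.of_forall fun t => by simpa using hgB t)
    · refine EventuallyEq.trans_isBigO (f₂ := 0) ?_ (Asymptotics.isBigO_zero _ _)
      filter_upwards [eventually_nhdsWithin_of_eventually_nhds (gt_mem_nhds (one_pos (α := ℝ)))]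
        with t ht
      exact indicator_of_notMem (notMem_Ioi.mpr ht.le) _
  rw [funext (partialSumErrorIntegral_eq_mellin a m)]
  exact hmellin.comp s differentiableAt_id.neg

theorem LSeries_eq_mul_partialSumErrorIntegral_add
    (hB : ∀ n : ℕ, ‖∑ k ∈ Finset.Icc 1 n, a k - m * n‖ ≤ B) {s : ℂ} (hs : 1 < s.re)
    (ha : LSeriesSummable a s) :
    LSeries a s = s * partialSumErrorIntegral a m s + m * s / (s - 1) := by
  have hsum : (fun n : ℕ => ∑ k ∈ Finset.Icc 1 n, a k) =O[atTop] fun n => (n : ℝ) ^ (1 : ℝ) := by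
    refine .of_bound (B + ‖m‖) ?_
    filter_upwards [eventually_ge_atTop 1] with n hn
    have hn' : (1 : ℝ) ≤ n := mod_cast hn
    have htriangle := norm_le_norm_add_norm_sub' (∑ k ∈ Finset.Icc 1 n, a k) (m * n)
    rw [norm_mul, norm_natCast] at htriangle
    rw [Real.rpow_one, Real.norm_of_nonneg n.cast_nonneg]
    nlinarith [hB n, (norm_nonneg _).trans (hB n)]
  have hintegrand : EqOn (fun t : ℝ => (∑ k ∈ Finset.Icc 1 ⌊t⌋₊, a k) * (t : ℂ) ^ (-(s + 1)))
      (fun t => partialSumError a m t * (t : ℂ) ^ (-(s + 1)) + m * (t : ℂ) ^ (-s)) (Ioi 1) := by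
    intro t ht
    have ht0 : (t : ℂ) ≠ 0 := ofReal_ne_zero.mpr (one_pos.trans ht).ne'
    have hpow : (t : ℂ) ^ (-s) = t * (t : ℂ) ^ (-(s + 1)) := by
      rw [neg_add', cpow_sub _ _ ht0, cpow_one, mul_div_cancel₀ _ ht0]
    simp only [partialSumError, hpow]
    ring
  rw [LSeries_eq_mul_integral a zero_le_one hs ha hsum,
    setIntegral_congr_fun measurableSet_Ioi hintegrand,
    integral_add (integrableOn_partialSumError_mul_cpow hB (by linarith))
      ((integrableOn_Ioi_cpow_of_lt (by simpa) one_pos).const_mul _),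
    integral_const_mul, integral_Ioi_cpow_of_lt (by simpa) one_pos, partialSumErrorIntegral,
    ofReal_one, one_cpow, show -s + 1 = -(s - 1) by ring, neg_div_neg_eq]
  ring

lemma eqOn_of_eqOn_re_gt {F G : ℂ → ℂ} {σ₀ σ₁ : ℝ} (hF : DifferentiableOn ℂ F {s | σ₀ < s.re})
    (hG : DifferentiableOn ℂ G {s | σ₀ < s.re}) (hFG : EqOn F G {s | σ₁ < s.re}) :
    EqOn F G {s | σ₀ < s.re} := by
  have hopen (σ : ℝ) : IsOpen {s : ℂ | σ < s.re} := isOpen_lt continuous_const continuous_re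
  refine (hF.analyticOnNhd (hopen σ₀)).eqOn_of_preconnected_of_eventuallyEq
    (hG.analyticOnNhd (hopen σ₀)) (convex_halfSpace_re_gt σ₀).isPreconnected
    (z₀ := (max σ₀ σ₁ + 1 : ℝ)) ?_ ?_
  · simp [lt_add_of_le_of_pos (le_max_left σ₀ σ₁) one_pos]
  · filter_upwards [(hopen σ₁).mem_nhds (show ((max σ₀ σ₁ + 1 : ℝ) : ℂ) ∈ _ by
      simp [lt_add_of_le_of_pos (le_max_right σ₀ σ₁) one_pos])] with s hs
    exact hFG hs

end PartialSums

section LFunctions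

open Complex Filter Topology

variable {N : ℕ} [NeZero N] {χ : DirichletCharacter ℂ N}

/-- The Riemann hypothesis for the `L`-function of a single Dirichlet character. -/
def SatisfiesGRH (χ : DirichletCharacter ℂ N) : Prop :=
  ∀ s : ℂ, DirichletCharacter.LFunction χ s = 0 → 0 < s.re → s.re < 1 → s.re = 1 / 2

/-- The average of `χ` over the residues modulo `N`; it is the residue of the `L`-function of `χ`
at `1`. -/
noncomputable def characterMean (χ : DirichletCharacter ℂ N) : ℂ :=
  (∑ x : ZMod N, χ x) / N

lemma characterMean_eq_zero (hχ : χ ≠ 1) : characterMean χ = 0 := by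
  rw [characterMean, MulChar.sum_eq_zero_of_ne_one hχ, zero_div]

lemma sum_range_natCast_zmod {E : Type*} [AddCommMonoid E] (F : ZMod N → E) :
    ∑ k ∈ Finset.range N, F (k : ZMod N) = ∑ x : ZMod N, F x :=
  Finset.sum_nbij' (fun k : ℕ => (k : ZMod N)) ZMod.val (by simp)
    (fun x _ => Finset.mem_range.mpr (ZMod.val_lt x))
    (fun _ hk => ZMod.val_cast_of_lt (Finset.mem_range.mp hk)) (by simp) (by simp)

lemma exists_norm_sum_sub_characterMean_le (χ : DirichletCharacter ℂ N) :
    ∃ B : ℝ, ∀ n : ℕ, ‖∑ k ∈ Finset.Icc 1 n, χ (k : ZMod N) - characterMean χ * n‖ ≤ B := by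
  have hN : (N : ℂ) ≠ 0 := NeZero.ne _
  obtain ⟨B, hB⟩ := exists_norm_sum_Icc_le_of_periodic (N := N)
    (b := fun k => χ (k : ZMod N) - characterMean χ) (NeZero.pos N) (fun n => by simp) (by
      rw [Finset.sum_sub_distrib, sum_range_natCast_zmod, Finset.sum_const, Finset.card_range,
        nsmul_eq_mul, characterMean, mul_div_cancel₀ _ hN, sub_self])
  refine ⟨B, fun n => ?_⟩
  have hBn := hB n
  rwa [Finset.sum_sub_distrib, Finset.sum_const, Nat.card_Icc, Nat.add_sub_cancel, nsmul_eq_mul,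
    mul_comm] at hBn

lemma LFunction_eq_mul_partialSumErrorIntegral_add (χ : DirichletCharacter ℂ N) {s : ℂ}
    (hs : 1 < s.re) : DirichletCharacter.LFunction χ s =
      s * partialSumErrorIntegral (fun k => χ k) (characterMean χ) s +
        characterMean χ * s / (s - 1) := by
  obtain ⟨B, hB⟩ := exists_norm_sum_sub_characterMean_le χ
  rw [DirichletCharacter.LFunction_eq_LSeries χ hs]
  exact LSeries_eq_mul_partialSumErrorIntegral_add hB hs
    (DirichletCharacter.LSeriesSummable_of_one_lt_re χ hs)

lemma differentiableOn_partialSumErrorIntegral_character (χ : DirichletCharacter ℂ N) :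
    DifferentiableOn ℂ (partialSumErrorIntegral (fun k => χ k) (characterMean χ))
      {s | 0 < s.re} := by
  obtain ⟨B, hB⟩ := exists_norm_sum_sub_characterMean_le χ
  exact fun s hs => (differentiableAt_partialSumErrorIntegral hB hs).differentiableWithinAt

theorem LFunction_eqOn_re_pos (hχ : χ ≠ 1) :
    EqOn (DirichletCharacter.LFunction χ)
      (fun s => s * partialSumErrorIntegral (fun k => χ k) (characterMean χ) s) {s | 0 < s.re} := by
  refine eqOn_of_eqOn_re_gt (DirichletCharacter.differentiable_LFunction hχ).differentiableOn
    (differentiableOn_id.mul (differentiableOn_partialSumErrorIntegral_character χ)) (σ₁ := 1)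
    fun s hs => ?_
  rw [LFunction_eq_mul_partialSumErrorIntegral_add χ hs, characterMean_eq_zero hχ]
  simp only [zero_mul, zero_div, add_zero]

lemma LFunctionTrivChar₁_eq_sub_one_mul {s : ℂ} (hs : s ≠ 1) :
    DirichletCharacter.LFunctionTrivChar₁ N s =
      (s - 1) * DirichletCharacter.LFunction (1 : DirichletCharacter ℂ N) s :=
  Function.update_of_ne hs _ _

theorem LFunctionTrivChar₁_eqOn_re_pos :
    EqOn (DirichletCharacter.LFunctionTrivChar₁ N)
      (fun s => s * ((s - 1) * partialSumErrorIntegral (fun k => (1 : DirichletCharacter ℂ N) k)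
        (characterMean (1 : DirichletCharacter ℂ N)) s +
          characterMean (1 : DirichletCharacter ℂ N))) {s | 0 < s.re} := by
  refine eqOn_of_eqOn_re_gt
    (DirichletCharacter.differentiable_LFunctionTrivChar₁ N).differentiableOn
    (differentiableOn_id.mul (((differentiableOn_id.sub_const 1).mul
      (differentiableOn_partialSumErrorIntegral_character 1)).add_const _)) (σ₁ := 1)
    fun s hs => ?_
  have hs1 : s ≠ 1 := fun h => by simp [h] at hs
  have hs1' : s - 1 ≠ 0 := sub_ne_zero.mpr hs1
  rw [LFunctionTrivChar₁_eq_sub_one_mul hs1, LFunction_eq_mul_partialSumErrorIntegral_add 1 hs]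
  field_simp

lemma norm_le_four_mul_one_add_abs_im {s : ℂ} (hs : 0 ≤ s.re) (hs4 : s.re ≤ 4) :
    ‖s‖ ≤ 4 * (1 + |s.im|) := by
  have hnorm := norm_le_abs_re_add_abs_im s
  rw [abs_of_nonneg hs] at hnorm
  linarith [abs_nonneg s.im]

lemma exists_norm_partialSumErrorIntegral_character_le (χ : DirichletCharacter ℂ N) :
    ∃ K, 0 ≤ K ∧ ∀ s : ℂ, 1 / 10 ≤ s.re →
      ‖partialSumErrorIntegral (fun k => χ k) (characterMean χ) s‖ ≤ K := by
  obtain ⟨B, hB⟩ := exists_norm_sum_sub_characterMean_le χ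
  have hB0 : 0 ≤ B := (norm_nonneg _).trans (hB 0)
  refine ⟨10 * (B + ‖characterMean χ‖), by positivity, fun s hs => ?_⟩
  refine (norm_partialSumErrorIntegral_le hB (by linarith)).trans ?_
  rw [div_le_iff₀ (by linarith)]
  nlinarith [norm_nonneg (characterMean χ)]

lemma exists_norm_LFunction_le (hχ : χ ≠ 1) :
    ∃ K : ℝ, ∀ s : ℂ, 1 / 10 ≤ s.re → s.re ≤ 4 →
      ‖DirichletCharacter.LFunction χ s‖ ≤ K * (1 + |s.im|) ^ 2 := by
  obtain ⟨K, hK, hbound⟩ := exists_norm_partialSumErrorIntegral_character_le χ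
  refine ⟨4 * K, fun s hs hs4 => ?_⟩
  have hpow : 1 + |s.im| ≤ (1 + |s.im|) ^ 2 := le_self_pow₀ (by simp) two_ne_zero
  rw [LFunction_eqOn_re_pos hχ (by simp only [mem_ofPred_eq]; linarith), norm_mul]
  calc ‖s‖ * ‖partialSumErrorIntegral (fun k => χ k) (characterMean χ) s‖
      ≤ 4 * (1 + |s.im|) * K := by
        gcongr
        exacts [norm_le_four_mul_one_add_abs_im (by linarith) hs4, hbound s hs]
    _ = 4 * K * (1 + |s.im|) := by ring
    _ ≤ 4 * K * (1 + |s.im|) ^ 2 := by gcongr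

lemma exists_norm_LFunctionTrivChar₁_le (N : ℕ) [NeZero N] :
    ∃ K : ℝ, ∀ s : ℂ, 1 / 10 ≤ s.re → s.re ≤ 4 →
      ‖DirichletCharacter.LFunctionTrivChar₁ N s‖ ≤ K * (1 + |s.im|) ^ 2 := by
  obtain ⟨K, -, hbound⟩ :=
    exists_norm_partialSumErrorIntegral_character_le (1 : DirichletCharacter ℂ N)
  set m := characterMean (1 : DirichletCharacter ℂ N)
  set M := partialSumErrorIntegral (fun k => (1 : DirichletCharacter ℂ N) k) m
  refine ⟨4 * (5 * K + ‖m‖), fun s hs hs4 => ?_⟩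
  have hnorm := norm_le_four_mul_one_add_abs_im (by linarith : 0 ≤ s.re) hs4
  have hone : 1 ≤ 1 + |s.im| := by simp
  have hsub : ‖s - 1‖ ≤ 5 * (1 + |s.im|) := by
    refine (norm_sub_le _ _).trans ?_
    rw [norm_one]
    linarith
  rw [LFunctionTrivChar₁_eqOn_re_pos (by simp only [mem_ofPred_eq]; linarith), norm_mul]
  calc ‖s‖ * ‖(s - 1) * M s + m‖
      ≤ 4 * (1 + |s.im|) * (5 * (1 + |s.im|) * K + ‖m‖ * (1 + |s.im|)) := by
        gcongr
        refine (norm_add_le _ _).trans (add_le_add ?_ (le_mul_of_one_le_right (norm_nonneg _) hone))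
        rw [norm_mul]
        gcongr
        exact hbound s hs
    _ = 4 * (5 * K + ‖m‖) * (1 + |s.im|) ^ 2 := by ring

/-- The inverse of the `L`-series is the series of `χ μ`, which is bounded on vertical lines to the
right of `1`. -/
theorem exists_pos_le_norm_LFunction (χ : DirichletCharacter ℂ N) {σ : ℝ} (hσ : 1 < σ) :
    ∃ δ, 0 < δ ∧ ∀ t : ℝ, δ ≤ ‖DirichletCharacter.LFunction χ (σ + t * I)‖ := by
  set S := ∑' n, ‖LSeries.term (1 : ℕ → ℂ) σ n‖
  have : 0 ≤ S := tsum_nonneg fun n => norm_nonneg _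
  have hsummable : LSeriesSummable (1 : ℕ → ℂ) σ := LSeriesSummable_one_iff.mpr (by simpa)
  refine ⟨1 / (1 + S), by positivity, fun t => ?_⟩
  have hre : 1 < ((σ : ℂ) + t * I).re := by simpa
  set u : ℕ → ℂ := (fun n : ℕ => χ n) * fun n => ((ArithmeticFunction.moebius n : ℤ) : ℂ) with hu
  have hterm (n : ℕ) : ‖LSeries.term u (σ + t * I) n‖ ≤ ‖LSeries.term (1 : ℕ → ℂ) σ n‖ := by
    refine (LSeries.norm_term_le _ ?_).trans (LSeries.norm_term_le_of_re_le_re 1 (by simp) n)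
    rw [hu, Pi.mul_apply, Pi.one_apply, norm_one, norm_mul, norm_intCast]
    exact mul_le_one₀ (DirichletCharacter.norm_le_one χ _) (abs_nonneg _)
      (mod_cast ArithmeticFunction.abs_moebius_le_one)
  have hu_le : ‖LSeries u (σ + t * I)‖ ≤ 1 + S := by
    have hsum := Summable.of_nonneg_of_le (fun n => norm_nonneg _) hterm hsummable.norm
    calc ‖LSeries u (σ + t * I)‖
        ≤ ∑' n, ‖LSeries.term u (σ + t * I) n‖ := norm_tsum_le_tsum_norm hsum
      _ ≤ S := hsum.tsum_le_tsum hterm hsummable.norm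
      _ ≤ 1 + S := by linarith
  rw [div_le_iff₀ (by positivity), DirichletCharacter.LFunction_eq_LSeries χ hre]
  calc 1 = ‖LSeries (fun n => χ n) (σ + t * I)‖ * ‖LSeries u (σ + t * I)‖ := by
        rw [← norm_mul, DirichletCharacter.LSeries.mul_mu_eq_one χ hre, norm_one]
    _ ≤ ‖LSeries (fun n => χ n) (σ + t * I)‖ * (1 + S) := by gcongr

lemma SatisfiesGRH.LFunction_ne_zero (hχ : SatisfiesGRH χ) {s : ℂ} (hs : 1 / 2 < s.re)
    (hpole : χ ≠ 1 ∨ s ≠ 1) : DirichletCharacter.LFunction χ s ≠ 0 := by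
  rcases lt_or_ge s.re 1 with hlt | hge
  · exact fun hzero => hs.ne' (hχ s hzero (by linarith) hlt)
  · exact DirichletCharacter.LFunction_ne_zero_of_one_le_re χ hpole hge

lemma exists_isRiemannType {f : ℂ → ℂ} {K δ : ℝ} (hf : Differentiable ℂ f)
    (hK : ∀ s : ℂ, 1 / 10 ≤ s.re → s.re ≤ 4 → ‖f s‖ ≤ K * (1 + |s.im|) ^ 2)
    (hδ : 0 < δ) (hle : ∀ t : ℝ, δ ≤ ‖f (2 + t * I)‖) (hne : ∀ s : ℂ, 1 / 2 < s.re → f s ≠ 0) :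
    ∃ A, IsRiemannType f A :=
  ⟨max 1 (max K (1 / δ)),
    { one_le := le_max_left _ _
      differentiable := hf
      norm_le := fun s hs hs4 => (hK s hs hs4).trans <|
        mul_le_mul_of_nonneg_right ((le_max_left _ _).trans (le_max_right _ _)) (sq_nonneg _)
      le_norm := fun t => (one_div_le (by positivity) hδ).mpr
        ((le_max_right _ _).trans (le_max_right _ _)) |>.trans (hle t)
      ne_zero := hne }⟩

theorem SatisfiesGRH.exists_isRiemannType_LFunction (hGRH : SatisfiesGRH χ) (hχ : χ ≠ 1) :
    ∃ A, IsRiemannType (DirichletCharacter.LFunction χ) A := by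
  obtain ⟨K, hK⟩ := exists_norm_LFunction_le hχ
  obtain ⟨δ, hδ, hle⟩ := exists_pos_le_norm_LFunction χ one_lt_two
  exact exists_isRiemannType (DirichletCharacter.differentiable_LFunction hχ) hK hδ
    (by exact_mod_cast hle) fun s hs => hGRH.LFunction_ne_zero hs (.inl hχ)

theorem SatisfiesGRH.exists_isRiemannType_LFunctionTrivChar₁
    (hGRH : SatisfiesGRH (1 : DirichletCharacter ℂ N)) :
    ∃ A, IsRiemannType (DirichletCharacter.LFunctionTrivChar₁ N) A := by
  obtain ⟨K, hK⟩ := exists_norm_LFunctionTrivChar₁_le N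
  obtain ⟨δ, hδ, hle⟩ := exists_pos_le_norm_LFunction (1 : DirichletCharacter ℂ N) one_lt_two
  refine exists_isRiemannType (DirichletCharacter.differentiable_LFunctionTrivChar₁ N) hK hδ
    (fun t => ?_) fun s hs => ?_
  · have hre : ((2 : ℂ) + t * I - 1).re = 1 := by norm_num
    have hsub : 1 ≤ ‖(2 : ℂ) + t * I - 1‖ := (re_le_norm _).trans' hre.ge
    rw [LFunctionTrivChar₁_eq_sub_one_mul fun h => by simp [h] at hre, norm_mul]
    exact (hle t).trans (le_mul_of_one_le_left (norm_nonneg _) hsub)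
  · rcases eq_or_ne s 1 with rfl | hs1
    · exact DirichletCharacter.LFunctionTrivChar₁_apply_one_ne_zero N
    · rw [LFunctionTrivChar₁_eq_sub_one_mul hs1]
      exact mul_ne_zero (sub_ne_zero.mpr hs1) (hGRH.LFunction_ne_zero hs (.inr hs1))

lemma neg_logDeriv_LFunction_eq_LSeries (χ : DirichletCharacter ℂ N) {s : ℂ} (hs : 1 < s.re) :
    -logDeriv (DirichletCharacter.LFunction χ) s =
      LSeries (fun n => χ n * (ArithmeticFunction.vonMangoldt n : ℂ)) s := by
  have htwist : LSeries (fun n => χ n * (ArithmeticFunction.vonMangoldt n : ℂ)) s = _ :=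
    DirichletCharacter.LSeries_twist_vonMangoldt_eq χ hs
  rw [htwist, logDeriv_apply, DirichletCharacter.deriv_LFunction_eq_deriv_LSeries _ hs,
    DirichletCharacter.LFunction_eq_LSeries _ hs, neg_div]

lemma neg_logDeriv_LFunctionTrivChar₁_eq_LSeries_sub {s : ℂ} (hs : 1 < s.re) :
    -logDeriv (DirichletCharacter.LFunctionTrivChar₁ N) s =
      LSeries (fun n => (1 : DirichletCharacter ℂ N) n * (ArithmeticFunction.vonMangoldt n : ℂ)) s -
        1 / (s - 1) := by
  have hs1 : s ≠ 1 := fun h => by simp [h] at hs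
  have hs1' : s - 1 ≠ 0 := sub_ne_zero.mpr hs1
  have hne := DirichletCharacter.LFunction_ne_zero_of_one_le_re (1 : DirichletCharacter ℂ N)
    (.inr hs1) hs.le
  rw [← neg_logDeriv_LFunction_eq_LSeries 1 hs, logDeriv_apply, logDeriv_apply,
    DirichletCharacter.deriv_LFunctionTrivChar₁_apply_of_ne_one N hs1,
    LFunctionTrivChar₁_eq_sub_one_mul hs1]
  field_simp
  ring

theorem SatisfiesGRH.exists_norm_sum_mul_vonMangoldt_sub_le (hGRH : SatisfiesGRH χ) :
    ∃ C, 0 < C ∧ ∀ x : ℝ, 2 ≤ x →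
      ‖∑ n ∈ Finset.Ioc 0 ⌊x⌋₊, χ n * (ArithmeticFunction.vonMangoldt n : ℂ) -
        (if χ = 1 then 1 else 0) * x‖ ≤ C * √x * Real.log x ^ 2 := by
  have hle (n : ℕ) : ‖χ n * (ArithmeticFunction.vonMangoldt n : ℂ)‖ ≤
      ArithmeticFunction.vonMangoldt n := by
    rw [norm_mul, norm_real, Real.norm_of_nonneg ArithmeticFunction.vonMangoldt_nonneg]
    exact mul_le_of_le_one_left ArithmeticFunction.vonMangoldt_nonneg
      (DirichletCharacter.norm_le_one χ _)
  by_cases hχ : χ = 1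
  · subst hχ
    obtain ⟨A, hA⟩ := hGRH.exists_isRiemannType_LFunctionTrivChar₁
    rw [if_pos rfl]
    exact hA.exists_norm_sum_sub_mul_le hle fun s hs =>
      neg_logDeriv_LFunctionTrivChar₁_eq_LSeries_sub hs
  · obtain ⟨A, hA⟩ := hGRH.exists_isRiemannType_LFunction hχ
    rw [if_neg hχ]
    refine hA.exists_norm_sum_sub_mul_le hle fun s hs => ?_
    rw [neg_logDeriv_LFunction_eq_LSeries χ hs, zero_div, sub_zero]

end LFunctions

section ChebyshevMeans

open Filter Asymptotics

/-- The Chebyshev-type sums `∑ n ≤ x, a n * Λ n` are asymptotic to `κ * x`, with the error term of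
size `√x * (log x) ^ 2` that GRH gives. The filter is the principal one, so that the bound is
uniform for `2 ≤ x` and not merely asymptotic. -/
def HasChebyshevMean (a : ℕ → ℂ) (κ : ℂ) : Prop :=
  (fun x : ℝ => ∑ n ∈ Finset.Ioc 0 ⌊x⌋₊, a n * (ArithmeticFunction.vonMangoldt n : ℂ) - κ * x)
    =O[𝓟 (Ici 2)] fun x => √x * Real.log x ^ 2

theorem SatisfiesGRH.hasChebyshevMean {N : ℕ} [NeZero N] {χ : DirichletCharacter ℂ N}
    (hGRH : SatisfiesGRH χ) :
    HasChebyshevMean (fun n => χ n) (if χ = 1 then 1 else 0) := by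
  obtain ⟨C, hC0, hC⟩ := hGRH.exists_norm_sum_mul_vonMangoldt_sub_le
  refine IsBigO.of_bound C (eventually_principal.mpr fun x hx => (hC x hx).trans ?_)
  rw [mul_assoc]
  gcongr
  exact le_abs_self _

theorem HasChebyshevMean.congr {a b : ℕ → ℂ} {κ : ℂ} (ha : HasChebyshevMean a κ)
    (hab : ∀ n ≠ 0, a n = b n) : HasChebyshevMean b κ := by
  refine IsBigO.congr_left ha fun x => congrArg (· - κ * (x : ℂ)) ?_
  exact Finset.sum_congr rfl fun n hn => by rw [hab n (Finset.mem_Ioc.mp hn).1.ne']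

theorem HasChebyshevMean.sum {ι : Type*} {s : Finset ι} {a : ι → ℕ → ℂ} {κ : ι → ℂ} (c : ι → ℂ)
    (ha : ∀ i ∈ s, HasChebyshevMean (a i) (κ i)) :
    HasChebyshevMean (fun n => ∑ i ∈ s, c i * a i n) (∑ i ∈ s, c i * κ i) := by
  refine (IsBigO.sum fun i hi => IsBigO.const_mul_left (ha i hi) (c i)).congr_left fun x => ?_
  simp only [Finset.sum_apply, mul_sub, Finset.sum_sub_distrib, Finset.sum_mul, Finset.mul_sum,
    mul_assoc]
  rw [Finset.sum_comm]

theorem hasChebyshevMean_dvd_sub_one {d : ℕ} [NeZero d]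
    (hGRH : ∀ χ : DirichletCharacter ℂ d, SatisfiesGRH χ) :
    HasChebyshevMean (fun n => if d ∣ n - 1 then 1 else 0) (d.totient : ℂ)⁻¹ := by
  have hφ : (d.totient : ℂ) ≠ 0 :=
    Nat.cast_ne_zero.mpr (Nat.totient_pos.mpr (NeZero.pos d)).ne'
  have hsum := HasChebyshevMean.sum (s := Finset.univ) (fun _ => (d.totient : ℂ)⁻¹)
    fun χ _ => (hGRH χ).hasChebyshevMean
  simp only [← Finset.mul_sum, Finset.sum_ite_eq', Finset.mem_univ, if_true, mul_one] at hsum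
  refine hsum.congr fun n hn => ?_
  have hone : (n : ZMod d) = 1 ↔ d ∣ n - 1 := by
    rw [← Nat.modEq_iff_dvd' (Nat.one_le_iff_ne_zero.mpr hn), ← ZMod.natCast_eq_natCast_iff,
      Nat.cast_one, eq_comm]
  rw [DirichletCharacter.sum_characters_eq, mul_ite, mul_zero, inv_mul_cancel₀ hφ]
  simp only [hone]

section PrimeProducts

variable {R : Type*} [CommRing R] {S : Finset ℕ}

theorem prod_ite_dvd_of_prime (hS : ∀ l ∈ S, l.Prime) (m : ℕ) :
    ∏ l ∈ S, (if l ∣ m then (1 : R) else 0) = if (∏ l ∈ S, l) ∣ m then 1 else 0 := by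
  have hdvd : (∏ l ∈ S, l) ∣ m ↔ ∀ l ∈ S, l ∣ m :=
    ⟨fun h l hl => (Finset.dvd_prod_of_mem _ hl).trans h,
      Finset.prod_primes_dvd m fun l hl => (hS l hl).prime⟩
  simp only [hdvd, Finset.prod_boole]

theorem cast_totient_prod_of_prime (hS : ∀ l ∈ S, l.Prime) :
    ((∏ l ∈ S, l).totient : R) = ∏ l ∈ S, ((l : R) - 1) := by
  induction S using Finset.induction_on with
  | empty => simp
  | insert p S hpS ih =>
    have hp := hS p (Finset.mem_insert_self p S)
    have hS' : ∀ l ∈ S, l.Prime := fun l hl => hS l (Finset.mem_insert_of_mem hl)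
    have hcop : p.Coprime (∏ l ∈ S, l) := Nat.Coprime.prod_right fun l hl =>
      (Nat.coprime_primes hp (hS' l hl)).mpr fun hpl => hpS (hpl ▸ hl)
    rw [Finset.prod_insert hpS, Finset.prod_insert hpS, Nat.totient_mul hcop, Nat.cast_mul, ih hS',
      Nat.totient_prime hp, Nat.cast_sub hp.one_le, Nat.cast_one]

theorem prod_one_sub_eq_sum_powerset {ι : Type*} (s : Finset ι) (f : ι → R) :
    ∏ i ∈ s, (1 - f i) = ∑ t ∈ s.powerset, (-1) ^ t.card * ∏ i ∈ t, f i := by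
  simp only [sub_eq_add_neg, Finset.prod_one_add, Finset.prod_neg]

theorem prod_primeFactors_one_sub_ite_dvd {e : ℕ} (he : e ≠ 0) (m : ℕ) :
    ∏ l ∈ e.primeFactors, (1 - if l ∣ m then (1 : R) else 0) =
      if m.gcd e = 1 then 1 else 0 := by
  have hite (l : ℕ) : (1 - if l ∣ m then (1 : R) else 0) = if ¬l ∣ m then 1 else 0 := by
    split_ifs <;> simp_all
  have hcop : (∀ l ∈ e.primeFactors, ¬l ∣ m) ↔ m.gcd e = 1 := by
    simp only [Nat.mem_primeFactors]
    refine ⟨fun h => Nat.coprime_of_dvd fun l hl hlm hle => h l ⟨hl, hle, he⟩ hlm, ?_⟩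
    exact fun h l ⟨hl, hle, _⟩ hlm => Nat.not_coprime_of_dvd_of_dvd hl.one_lt hlm hle h
  simp only [hite, Finset.prod_boole, hcop]

end PrimeProducts

theorem hasChebyshevMean_coprime_sub_one {e : ℕ} (he : e ≠ 0)
    (hGRH : ∀ (d : ℕ) [NeZero d], d ∣ e → ∀ χ : DirichletCharacter ℂ d, SatisfiesGRH χ) :
    HasChebyshevMean (fun n => if (n - 1).gcd e = 1 then 1 else 0)
      (∏ l ∈ e.primeFactors, (1 - 1 / ((l : ℂ) - 1))) := by
  simp only [← prod_primeFactors_one_sub_ite_dvd he, prod_one_sub_eq_sum_powerset]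
  refine HasChebyshevMean.sum _ fun S hS => ?_
  have hS := Finset.mem_powerset.mp hS
  have hprime : ∀ l ∈ S, l.Prime := fun l hl => Nat.prime_of_mem_primeFactors (hS hl)
  have hdvd : ∏ l ∈ S, l ∣ e :=
    (Finset.prod_dvd_prod_of_subset _ _ _ hS).trans (Nat.prod_primeFactors_dvd e)
  have : NeZero (∏ l ∈ S, l) := ⟨ne_zero_of_dvd_ne_zero he hdvd⟩
  have hmean := hasChebyshevMean_dvd_sub_one (hGRH _ hdvd)
  rw [cast_totient_prod_of_prime hprime, ← Finset.prod_inv_distrib] at hmean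
  simpa only [prod_ite_dvd_of_prime hprime, one_div] using hmean

end ChebyshevMeans

section LogarithmicIntegral

open Real Filter Topology

theorem abs_one_div_log_sub_le {t : ℝ} (ht : 0 < t) : |1 / log t - 1 / (t - 1)| ≤ 1 := by
  rcases eq_or_ne t 1 with rfl | ht1
  · simp
  have hlog_le : log t ≤ t - 1 := log_le_sub_one_of_pos ht
  have hle_log : (t - 1) / t ≤ log t := by
    rw [sub_div, div_self ht.ne', one_div]
    exact one_sub_inv_le_log_of_pos ht
  have hinv : 1 / ((t - 1) / t) = 1 + 1 / (t - 1) := by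
    have := sub_ne_zero.mpr ht1
    field_simp
    ring
  have hsandwich : 1 / (t - 1) ≤ 1 / log t ∧ 1 / log t ≤ 1 / ((t - 1) / t) := by
    rcases ht1.lt_or_gt with h | h
    · exact ⟨one_div_le_one_div_of_neg_of_le (sub_neg.mpr h) hlog_le,
        one_div_le_one_div_of_neg_of_le (log_neg ht h) hle_log⟩
    · exact ⟨one_div_le_one_div_of_le (log_pos h) hlog_le,
        one_div_le_one_div_of_le (div_pos (sub_pos.mpr h) ht) hle_log⟩
  rw [abs_le]
  constructor <;> linarith [hsandwich.1, hsandwich.2]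

theorem intervalIntegrable_one_div_log_sub {a b : ℝ} (ha : 0 ≤ a) (hb : 0 ≤ b) :
    IntervalIntegrable (fun t : ℝ => 1 / log t - 1 / (t - 1)) volume a b := by
  refine (intervalIntegrable_const (c := (1 : ℝ))).mono_fun
    (Measurable.aestronglyMeasurable (by fun_prop)) ?_
  refine (ae_restrict_iff' measurableSet_uIoc).2 (.of_forall fun t ht => ?_)
  rw [norm_one]
  exact abs_one_div_log_sub_le ((le_min ha hb).trans_lt ht.1)

theorem intervalIntegrable_one_div_sub_one {a b : ℝ} (h : (1 : ℝ) ∉ uIcc a b) :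
    IntervalIntegrable (fun t : ℝ => 1 / (t - 1)) volume a b := by
  refine ContinuousOn.intervalIntegrable fun t ht => ContinuousAt.continuousWithinAt ?_
  have : t - 1 ≠ 0 := sub_ne_zero.mpr fun ht1 => h (ht1 ▸ ht)
  fun_prop (disch := assumption)

theorem intervalIntegrable_one_div_log {a b : ℝ} (ha : 0 ≤ a) (hb : 0 ≤ b)
    (h : (1 : ℝ) ∉ uIcc a b) : IntervalIntegrable (fun t : ℝ => 1 / log t) volume a b :=
  ((intervalIntegrable_one_div_log_sub ha hb).add (intervalIntegrable_one_div_sub_one h)).congr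
    fun _ _ => sub_add_cancel _ _

theorem integral_one_div_log_eq_add_log {a b : ℝ} (ha : 0 ≤ a) (hb : 0 ≤ b)
    (h : (1 : ℝ) ∉ uIcc a b) :
    ∫ t in a..b, 1 / log t =
      (∫ t in a..b, (1 / log t - 1 / (t - 1))) + log ((b - 1) / (a - 1)) := by
  have hzero : (0 : ℝ) ∉ uIcc (a - 1) (b - 1) := by
    rw [mem_uIcc] at h ⊢
    contrapose! h
    exact h.imp (fun h => ⟨by linarith, by linarith⟩) fun h => ⟨by linarith, by linarith⟩
  rw [intervalIntegral.integral_sub (intervalIntegrable_one_div_log ha hb h)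
    (intervalIntegrable_one_div_sub_one h),
    intervalIntegral.integral_comp_sub_right (fun t => 1 / t) 1, integral_one_div hzero,
    sub_add_cancel]

theorem tendsto_integral_one_div_log_sub_around_one :
    Tendsto (fun ε : ℝ => ∫ t in (1 - ε)..(1 + ε), (1 / log t - 1 / (t - 1))) (𝓝[>] 0) (𝓝 0) := by
  have hwidth : Tendsto (fun ε : ℝ => 2 * ε) (𝓝[>] 0) (𝓝 0) :=
    (Continuous.tendsto' (by fun_prop) 0 0 (mul_zero 2)).mono_left nhdsWithin_le_nhds
  refine squeeze_zero_norm' ?_ hwidth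
  filter_upwards [Ioo_mem_nhdsGT zero_lt_one] with ε ⟨hε0, hε1⟩
  calc ‖∫ t in (1 - ε)..(1 + ε), (1 / log t - 1 / (t - 1))‖
      ≤ 1 * |1 + ε - (1 - ε)| :=
        intervalIntegral.norm_integral_le_of_norm_le_const fun _ ht => by
          rw [uIoc_of_le (by linarith)] at ht
          exact abs_one_div_log_sub_le (by linarith [ht.1])
    _ = 2 * ε := by
        rw [one_mul, show 1 + ε - (1 - ε) = 2 * ε by ring, abs_of_pos (by linarith)]

/-- The singular parts `± log ε` of the two integrals cancel, and `1 / log t - 1 / (t - 1)` is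
bounded near `1`. -/
theorem integral_one_div_log_punctured {x ε : ℝ} (hx : 2 ≤ x) (hε0 : 0 < ε) (hε1 : ε < 1) :
    (∫ t in Ioo 0 (1 - ε), 1 / log t) + (∫ t in Ioo (1 + ε) x, 1 / log t) =
      (∫ t in (0 : ℝ)..2, (1 / log t - 1 / (t - 1))) + (∫ t in (2 : ℝ)..x, 1 / log t) -
        ∫ t in (1 - ε)..(1 + ε), (1 / log t - 1 / (t - 1)) := by
  have hleft : (1 : ℝ) ∉ uIcc 0 (1 - ε) := notMem_uIcc_of_gt zero_lt_one (by linarith)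
  have hright : (1 : ℝ) ∉ uIcc (1 + ε) 2 := notMem_uIcc_of_lt (by linarith) one_lt_two
  have htail : (1 : ℝ) ∉ uIcc 2 x := notMem_uIcc_of_lt one_lt_two (by linarith)
  have h0 : 0 ≤ 1 - ε := by linarith
  have h1 : 0 ≤ 1 + ε := by linarith
  have hlog_left : log ((1 - ε - 1) / (0 - 1)) = log ε := by ring_nf
  have hlog_right : log ((2 - 1) / (1 + ε - 1)) = -log ε := by rw [← log_inv]; ring_nf
  rw [← integral_Ioc_eq_integral_Ioo, ← integral_Ioc_eq_integral_Ioo,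
    ← intervalIntegral.integral_of_le h0, ← intervalIntegral.integral_of_le (by linarith),
    ← intervalIntegral.integral_add_adjacent_intervals
      (intervalIntegrable_one_div_log h1 zero_le_two hright)
      (intervalIntegrable_one_div_log zero_le_two (by linarith) htail),
    integral_one_div_log_eq_add_log le_rfl h0 hleft,
    integral_one_div_log_eq_add_log h1 zero_le_two hright, hlog_left, hlog_right,
    ← intervalIntegral.integral_add_adjacent_intervals
      (intervalIntegrable_one_div_log_sub le_rfl h1)
      (intervalIntegrable_one_div_log_sub h1 zero_le_two),
    ← intervalIntegral.integral_add_adjacent_intervals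
      (intervalIntegrable_one_div_log_sub le_rfl h0) (intervalIntegrable_one_div_log_sub h0 h1)]
  ring

theorem li_eq_add_integral_one_div_log {x : ℝ} (hx : 2 ≤ x) :
    li x = (∫ t in (0 : ℝ)..2, (1 / log t - 1 / (t - 1))) + ∫ t in (2 : ℝ)..x, 1 / log t := by
  have hlim := tendsto_integral_one_div_log_sub_around_one.const_sub
    ((∫ t in (0 : ℝ)..2, (1 / log t - 1 / (t - 1))) + ∫ t in (2 : ℝ)..x, 1 / log t)
  rw [sub_zero] at hlim
  refine (hlim.congr' ?_).limUnder_eq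
  filter_upwards [Ioo_mem_nhdsGT zero_lt_one] with ε ⟨hε0, hε1⟩
  exact (integral_one_div_log_punctured hx hε0 hε1).symm

theorem integral_one_div_log_eq_div_log_add {x : ℝ} (hx : 2 ≤ x) :
    ∫ t in (2 : ℝ)..x, 1 / log t =
      x / log x - 2 / log 2 + ∫ t in (2 : ℝ)..x, 1 / log t ^ 2 := by
  have hlog := intervalIntegrable_one_div_log zero_le_two (by linarith)
    (notMem_uIcc_of_lt one_lt_two (by linarith : 1 < x))
  have hlog_sq := Chebyshev.intervalIntegrable_one_div_log_sq one_lt_two (by linarith : 1 < x)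
  have hderiv : ∀ t ∈ uIcc 2 x,
      HasDerivAt (fun t => t / log t) (1 / log t - 1 / log t ^ 2) t := by
    intro t ht
    rw [uIcc_of_le hx] at ht
    have ht0 : t ≠ 0 := by linarith [ht.1]
    have hlogt : log t ≠ 0 := (log_pos (by linarith [ht.1])).ne'
    refine ((hasDerivAt_id t).div (hasDerivAt_log ht0) hlogt).congr_deriv ?_
    simp only [id]
    field_simp
  have hftc := intervalIntegral.integral_eq_sub_of_hasDerivAt hderiv (hlog.sub hlog_sq)
  rw [intervalIntegral.integral_sub hlog hlog_sq] at hftc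
  linarith

/-- The constant in `li x = x / log x + ∫ t in 2..x, 1 / log t ^ 2 + liConstant`, which comes from
the principal value on `[0, 2]` and the boundary term at `2`. -/
noncomputable def liConstant : ℝ :=
  (∫ t in (0 : ℝ)..2, (1 / log t - 1 / (t - 1))) - 2 / log 2

theorem li_eq_div_log_add_integral {x : ℝ} (hx : 2 ≤ x) :
    li x = x / log x + (∫ t in (2 : ℝ)..x, 1 / log t ^ 2) + liConstant := by
  rw [li_eq_add_integral_one_div_log hx, integral_one_div_log_eq_div_log_add hx, liConstant]
  ring

end LogarithmicIntegral

section PartialSummation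

open Real Filter Asymptotics

/-- The Chebyshev function `θ` weighted by `a`: the sum of `a p * log p` over the primes
`p ≤ x`. -/
noncomputable def weightedTheta (a : ℕ → ℝ) (x : ℝ) : ℝ :=
  ∑ n ∈ Finset.Icc 0 ⌊x⌋₊, if n.Prime then a n * log n else 0

theorem sum_ite_prime_eq_weightedTheta_div_log_add_integral (a : ℕ → ℝ) {x : ℝ} (hx : 2 ≤ x) :
    ∑ n ∈ Finset.Icc 0 ⌊x⌋₊, (if n.Prime then a n else 0) =
      weightedTheta a x / log x + ∫ t in (2 : ℝ)..x, weightedTheta a t / (t * log t ^ 2) := by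
  have hne {z : ℝ} (hz : 2 ≤ z) : z ≠ 0 ∧ log z ≠ 0 :=
    ⟨by linarith, (log_pos (by linarith)).ne'⟩
  have hterm (n : ℕ) : (if n.Prime then a n else 0) =
      (log n)⁻¹ * if n.Prime then a n * log n else 0 := by
    split_ifs with hn
    · have := (hne (Nat.ofNat_le_cast.mpr hn.two_le)).2
      field_simp
    · rw [mul_zero]
  have hderiv (t : ℝ) : deriv (fun z => (log z)⁻¹) t * weightedTheta a t =
      -(weightedTheta a t / (t * log t ^ 2)) := by
    simp [field]
  simp only [hterm]
  rw [sum_mul_eq_sub_integral_mul₁ _ (f := fun z => (log z)⁻¹) (by simp [Nat.not_prime_zero])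
    (by simp [Nat.not_prime_one]), ← intervalIntegral.integral_of_le hx]
  · change _ * weightedTheta a x - ∫ t in (2 : ℝ)..x, _ * weightedTheta a t = _
    simp only [hderiv, intervalIntegral.integral_neg]
    ring
  · intro z hz
    obtain ⟨hz0, hlog⟩ := hne hz.1
    fun_prop (disch := assumption)
  · refine ContinuousOn.integrableOn_Icc fun z hz => ContinuousWithinAt.congr
      (ContinuousAt.continuousWithinAt ?_) (fun _ _ => deriv_inv_log_apply) deriv_inv_log_apply
    obtain ⟨hz0, hlog⟩ := hne hz.1
    have := pow_ne_zero 2 hlog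
    fun_prop (disch := assumption)

theorem intervalIntegrable_weightedTheta_div (a : ℕ → ℝ) {x : ℝ} (hx : 2 ≤ x) :
    IntervalIntegrable (fun t => weightedTheta a t / (t * log t ^ 2)) volume 2 x := by
  have hweight : IntegrableOn (fun t : ℝ => (t * log t ^ 2)⁻¹) (Icc 2 x) := by
    refine ContinuousOn.integrableOn_Icc fun t ht => ContinuousAt.continuousWithinAt ?_
    have ht0 : t ≠ 0 := by linarith [ht.1]
    have : t * log t ^ 2 ≠ 0 := mul_ne_zero ht0 (pow_ne_zero 2 (log_pos (by linarith [ht.1])).ne')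
    fun_prop (disch := assumption)
  rw [intervalIntegrable_iff_integrableOn_Icc_of_le hx]
  simp only [weightedTheta, div_eq_inv_mul]
  exact integrableOn_mul_sum_Icc _ zero_le_two hweight

theorem intervalIntegrable_one_div_sqrt {x : ℝ} (hx : 2 ≤ x) :
    IntervalIntegrable (fun t => 1 / √t) volume 2 x := by
  refine ContinuousOn.intervalIntegrable fun t ht => ContinuousAt.continuousWithinAt ?_
  rw [uIcc_of_le hx] at ht
  have : √t ≠ 0 := (sqrt_pos.2 (by linarith [ht.1])).ne'
  fun_prop (disch := assumption)

theorem integral_one_div_sqrt_le {x : ℝ} (hx : 2 ≤ x) : ∫ t in (2 : ℝ)..x, 1 / √t ≤ 2 * √x := by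
  have hderiv : ∀ t ∈ uIcc 2 x, HasDerivAt (fun t => 2 * √t) (1 / √t) t := by
    intro t ht
    rw [uIcc_of_le hx] at ht
    have ht0 : 0 < t := by linarith [ht.1]
    refine ((hasDerivAt_sqrt ht0.ne').const_mul 2).congr_deriv ?_
    have := (sqrt_pos.2 ht0).ne'
    field_simp
  rw [intervalIntegral.integral_eq_sub_of_hasDerivAt hderiv (intervalIntegrable_one_div_sqrt hx)]
  linarith [sqrt_nonneg 2]

theorem one_isBigO_log : (fun _ : ℝ => (1 : ℝ)) =O[𝓟 (Ici 2)] log := by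
  refine IsBigO.of_bound (log 2)⁻¹ (eventually_principal.mpr fun x hx => ?_)
  have hlog2 : 0 < log 2 := log_pos one_lt_two
  have hlog : log 2 ≤ log x := log_le_log zero_lt_two hx
  rw [norm_one, norm_of_nonneg (hlog2.le.trans hlog), ← div_eq_inv_mul]
  exact (one_le_div hlog2).mpr hlog

theorem one_isBigO_sqrt : (fun _ : ℝ => (1 : ℝ)) =O[𝓟 (Ici 2)] sqrt := by
  refine IsBigO.of_bound 1 (eventually_principal.mpr fun x hx => ?_)
  rw [norm_one, one_mul, norm_of_nonneg (sqrt_nonneg x)]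
  exact one_le_sqrt.mpr (one_le_two.trans hx)

theorem isBigO_integral_div_mul_log_sq {E : ℝ → ℝ}
    (hE : E =O[𝓟 (Ici 2)] fun t => √t * log t ^ 2) :
    (fun x => ∫ t in (2 : ℝ)..x, E t / (t * log t ^ 2)) =O[𝓟 (Ici 2)] sqrt := by
  obtain ⟨D, hD, hE⟩ := hE.exists_pos
  rw [IsBigOWith, eventually_principal] at hE
  have hbound {t : ℝ} (ht : 2 ≤ t) : ‖E t / (t * log t ^ 2)‖ ≤ D * (1 / √t) := by
    have ht0 : 0 < t := by linarith
    have hlog : 0 < log t := log_pos (by linarith)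
    have : 0 < √t := sqrt_pos.mpr ht0
    rw [norm_div, norm_of_nonneg (by positivity : 0 ≤ t * log t ^ 2), div_le_iff₀ (by positivity)]
    calc ‖E t‖ ≤ D * (√t * log t ^ 2) := by
          simpa only [norm_of_nonneg (by positivity : 0 ≤ √t * log t ^ 2)] using hE t ht
      _ = D * (1 / √t) * ((√t * √t) * log t ^ 2) := by field_simp
      _ = D * (1 / √t) * (t * log t ^ 2) := by rw [mul_self_sqrt ht0.le]
  refine IsBigO.of_bound (D * 2) (eventually_principal.mpr fun x hx => ?_)
  calc ‖∫ t in (2 : ℝ)..x, E t / (t * log t ^ 2)‖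
      ≤ ∫ t in (2 : ℝ)..x, D * (1 / √t) :=
        intervalIntegral.norm_integral_le_of_norm_le hx
          (.of_forall fun t ht => hbound ht.1.le) ((intervalIntegrable_one_div_sqrt hx).const_mul D)
    _ ≤ D * 2 * ‖√x‖ := by
        rw [intervalIntegral.integral_const_mul, norm_of_nonneg (sqrt_nonneg x), mul_assoc]
        exact mul_le_mul_of_nonneg_left (integral_one_div_sqrt_le hx) hD.le

variable {a : ℕ → ℝ} {κ : ℝ}

theorem abs_weightedTheta_sub_sum_vonMangoldt_le (ha : ∀ n, |a n| ≤ 1) {x : ℝ} (hx : 1 ≤ x) :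
    |weightedTheta a x - ∑ n ∈ Finset.Ioc 0 ⌊x⌋₊, a n * ArithmeticFunction.vonMangoldt n| ≤
      2 * √x * log x := by
  have hIoc : weightedTheta a x =
      ∑ n ∈ Finset.Ioc 0 ⌊x⌋₊, if n.Prime then a n * log n else 0 := by
    rw [weightedTheta, ← Finset.add_sum_Ioc_eq_sum_Icc (Nat.zero_le _),
      if_neg Nat.not_prime_zero, zero_add]
  have hterm (n : ℕ) :
      |(if n.Prime then a n * log n else 0) - a n * ArithmeticFunction.vonMangoldt n| ≤
        if ¬n.Prime then ArithmeticFunction.vonMangoldt n else 0 := by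
    by_cases hn : n.Prime
    · simp [hn, ArithmeticFunction.vonMangoldt_apply_prime]
    · have hΛ : 0 ≤ ArithmeticFunction.vonMangoldt n := ArithmeticFunction.vonMangoldt_nonneg
      rw [if_neg hn, if_pos hn, zero_sub, abs_neg, abs_mul, abs_of_nonneg hΛ]
      exact mul_le_of_le_one_left hΛ (ha n)
  rw [hIoc, ← Finset.sum_sub_distrib]
  calc |∑ n ∈ Finset.Ioc 0 ⌊x⌋₊, ((if n.Prime then a n * log n else 0) -
          a n * ArithmeticFunction.vonMangoldt n)|
      ≤ ∑ n ∈ Finset.Ioc 0 ⌊x⌋₊, if ¬n.Prime then ArithmeticFunction.vonMangoldt n else 0 :=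
        (Finset.abs_sum_le_sum_abs _ _).trans (Finset.sum_le_sum fun n _ => hterm n)
    _ = Chebyshev.psi x - Chebyshev.theta x := by
        rw [Chebyshev.psi_sub_theta_eq_sum_not_prime, Finset.sum_filter]
    _ ≤ 2 * √x * log x := Chebyshev.psi_sub_theta_le hx

theorem HasChebyshevMean.isBigO_weightedTheta_sub
    (h : HasChebyshevMean (fun n => (a n : ℂ)) κ) (ha : ∀ n, |a n| ≤ 1) :
    (fun x => weightedTheta a x - κ * x) =O[𝓟 (Ici 2)] fun x => √x * log x ^ 2 := by
  have hpsi : (fun x : ℝ =>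
      ∑ n ∈ Finset.Ioc 0 ⌊x⌋₊, a n * ArithmeticFunction.vonMangoldt n - κ * x)
        =O[𝓟 (Ici 2)] fun x => √x * log x ^ 2 := by
    refine Complex.isBigO_ofReal_left.mp (IsBigO.congr_left h fun x => ?_)
    push_cast
    rfl
  have hprime_powers : (fun x : ℝ => weightedTheta a x -
      ∑ n ∈ Finset.Ioc 0 ⌊x⌋₊, a n * ArithmeticFunction.vonMangoldt n)
        =O[𝓟 (Ici 2)] fun x => √x * log x := by
    refine IsBigO.of_bound 2 (eventually_principal.mpr fun x hx => ?_)
    calc _ ≤ 2 * √x * log x :=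
          abs_weightedTheta_sub_sum_vonMangoldt_le ha (one_le_two.trans hx)
      _ ≤ 2 * ‖√x * log x‖ := by
          rw [mul_assoc]
          exact mul_le_mul_of_nonneg_left (le_abs_self _) zero_le_two
  have hlog : (fun x : ℝ => √x * log x) =O[𝓟 (Ici 2)] fun x => √x * log x ^ 2 := by
    simpa only [one_mul, ← pow_two] using
      (isBigO_refl sqrt _).mul (one_isBigO_log.mul (isBigO_refl log _))
  simpa only [sub_add_sub_cancel] using (hprime_powers.trans hlog).add hpsi

theorem sum_ite_prime_sub_mul_li_eq (a : ℕ → ℝ) (κ : ℝ) {x : ℝ} (hx : 2 ≤ x) :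
    ∑ n ∈ Finset.Icc 0 ⌊x⌋₊, (if n.Prime then a n else 0) - κ * li x =
      (weightedTheta a x - κ * x) / log x +
        (∫ t in (2 : ℝ)..x, (weightedTheta a t - κ * t) / (t * log t ^ 2)) - κ * liConstant := by
  have hlog_sq := Chebyshev.intervalIntegrable_one_div_log_sq one_lt_two (by linarith : 1 < x)
  have hintegral : ∫ t in (2 : ℝ)..x, (weightedTheta a t - κ * t) / (t * log t ^ 2) =
      (∫ t in (2 : ℝ)..x, weightedTheta a t / (t * log t ^ 2)) -
        κ * ∫ t in (2 : ℝ)..x, 1 / log t ^ 2 := by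
    rw [← intervalIntegral.integral_const_mul, ← intervalIntegral.integral_sub
      (intervalIntegrable_weightedTheta_div a hx) (hlog_sq.const_mul κ)]
    refine intervalIntegral.integral_congr fun t ht => ?_
    rw [uIcc_of_le hx] at ht
    have ht0 : t ≠ 0 := by linarith [ht.1]
    field_simp
  rw [hintegral, sum_ite_prime_eq_weightedTheta_div_log_add_integral a hx,
    li_eq_div_log_add_integral hx]
  ring

theorem HasChebyshevMean.isBigO_sum_ite_prime_sub_mul_li
    (h : HasChebyshevMean (fun n => (a n : ℂ)) κ) (ha : ∀ n, |a n| ≤ 1) :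
    (fun x => ∑ n ∈ Finset.Icc 0 ⌊x⌋₊, (if n.Prime then a n else 0) - κ * li x)
      =O[𝓟 (Ici 2)] fun x => √x * log x := by
  have hE := h.isBigO_weightedTheta_sub ha
  have hboundary : (fun x => (weightedTheta a x - κ * x) / log x)
      =O[𝓟 (Ici 2)] fun x => √x * log x := by
    refine (hE.mul (isBigO_refl (fun x => (log x)⁻¹) _)).trans_eventuallyEq ?_
    refine eventually_principal.mpr fun x hx => ?_
    have : log x ≠ 0 := (log_pos (one_lt_two.trans_le hx)).ne'
    field_simp
  have hsqrt : sqrt =O[𝓟 (Ici 2)] fun x => √x * log x := by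
    simpa only [mul_one] using (isBigO_refl sqrt _).mul one_isBigO_log
  have hconst : (fun _ => κ * liConstant) =O[𝓟 (Ici 2)] sqrt := by
    simpa only [mul_one] using one_isBigO_sqrt.const_mul_left (κ * liConstant)
  refine ((hboundary.add ((isBigO_integral_div_mul_log_sq hE).trans hsqrt)).sub
    (hconst.trans hsqrt)).congr' ?_ .rfl
  exact eventually_principal.mpr fun x hx => (sum_ite_prime_sub_mul_li_eq a κ hx).symm

end PartialSummation

theorem primePiCoprime_eq_sum (e : ℕ) {x : ℝ} (hx : 0 ≤ x) :
    (primePiCoprime e x : ℝ) = ∑ n ∈ Finset.Icc 0 ⌊x⌋₊,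
      if n.Prime then if (n - 1).gcd e = 1 then 1 else 0 else 0 := by
  have hcard : primePiCoprime e x =
      {n ∈ Finset.Icc 0 ⌊x⌋₊ | n.Prime ∧ (n - 1).gcd e = 1}.card := by
    rw [primePiCoprime, ← Nat.card_eq_finsetCard]
    refine Nat.card_congr (Equiv.subtypeEquivRight fun p => ?_)
    simp only [Finset.mem_filter, Finset.mem_Icc, zero_le, true_and, Nat.le_floor_iff hx]
    tauto
  simp only [hcard, Finset.card_filter, Nat.cast_sum, Nat.cast_ite, Nat.cast_one, Nat.cast_zero,
    ite_and]

theorem count_primes_coprime_general {e : ℕ} (he : e ≠ 0)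
    (hGRH : ∀ (d : ℕ) [NeZero d], d ∣ e → ∀ χ : DirichletCharacter ℂ d, SatisfiesGRH χ) :
    ∃ C : ℝ, 0 < C ∧ ∀ x : ℝ, 2 ≤ x →
      |(primePiCoprime e x : ℝ)
        - (∏ l ∈ e.primeFactors, (1 - 1 / ((l : ℝ) - 1))) * li x|
      ≤ C * Real.sqrt x * Real.log x := by
  set a : ℕ → ℝ := fun n => if (n - 1).gcd e = 1 then 1 else 0
  set κ : ℝ := ∏ l ∈ e.primeFactors, (1 - 1 / ((l : ℝ) - 1)) with hκ
  have ha : ∀ n, |a n| ≤ 1 := fun n => by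
    simp only [a]
    split_ifs <;> simp
  have hmean : HasChebyshevMean (fun n => (a n : ℂ)) κ := by
    simpa only [a, hκ, apply_ite Complex.ofReal, Complex.ofReal_one, Complex.ofReal_zero,
      Complex.ofReal_prod, Complex.ofReal_sub, Complex.ofReal_div, Complex.ofReal_natCast]
      using hasChebyshevMean_coprime_sub_one he hGRH
  obtain ⟨C, hC, hbound⟩ := (hmean.isBigO_sum_ite_prime_sub_mul_li ha).exists_pos
  refine ⟨C, hC, fun x hx => ?_⟩
  have hlog : 0 ≤ Real.log x := Real.log_nonneg (one_le_two.trans hx)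
  have hx0 : 0 ≤ x := zero_le_two.trans hx
  have := Filter.eventually_principal.mp hbound.bound x hx
  rwa [Real.norm_eq_abs, Real.norm_of_nonneg (mul_nonneg x.sqrt_nonneg hlog),
    ← primePiCoprime_eq_sum e hx0, ← mul_assoc] at this

/-- Theorem 3.7 of the paper. -/
theorem count_primes_coprime
    (hGRH : GeneralizedRiemannHypothesis)
    (e : ℕ) (he : 3 ≤ e) :
    ∃ C : ℝ, 0 < C ∧ ∀ x : ℝ, 2 ≤ x →
      |(primePiCoprime e x : ℝ)
        - (∏ l ∈ e.primeFactors, (1 - 1 / ((l : ℝ) - 1))) * li x|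
      ≤ C * Real.sqrt x * Real.log x :=
  count_primes_coprime_general (by omega) fun d _ _ χ => hGRH d χ
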